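/- Let k ≥ 2, let w be a nonempty word over Σ_k, let s = s_{k,w}, and let n ≥ 1 be an integer. Then for all N ≥ ⌈log_k(n)⌉ + 2: P_s^{(2)}(n,N) = n − 1 if w ∈ {0}* ∪ {k−1}*, and P_s^{(2)}(n,N) = 0 if w ∉ {0}* ∪ {k−1}*. -/

import Mathlib

/-!
Write a number `m` in base `k`, fill the positions above its leading digit with a padding letter
`c`, namely `c = k - 1` if `w` begins with `0` and `c = 0` otherwise, and count the occurrences of
`w` in the resulting infinite digit sequence. Since `w` does not begin with `c`, the padding creates
no occurrence, and the count `wcount` agrees with the digital sequence (`dseq_eq`; the harmless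
exception is `w = 0` at `m = 0`). It is additive: cutting off the lowest `J` digits splits it into
the occurrences starting there and the count of the quotient (`Ctx.S_split`).

Let `L = ⌈log_k n⌉`, so that `n ≤ k ^ L`, and let `N ≥ L + 2`. The first difference of the complexity
counts the factors of length `n` whose maximum is exactly `N` (`Pc1_eq_ncard`). These are compared
with the factors of maximum `N - 1` through the map that adds `1` to every letter.

* This map sends factors with maximum `N - 1` to factors with maximum `N`
  (`Ctx.exists_increase`): prepending the digits `c w c^l` to every number of the window creates
  exactly one more occurrence, where `l` is the length of `w`.
* Conversely, take a window with maximum `N`. If the prefix shared by its numbers contains `w`,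
  cutting this prefix inside its topmost occurrence removes exactly one occurrence
  (`Ctx.decrease`). Otherwise, as `N > L`, the window crosses a multiple `b * k ^ J` with `J ≥ L`
  (`window_cases`). Its numbers then have long runs of `0` or `k - 1`, and if `w` is neither `0^l` nor
  `(k-1)^l`, at most one occurrence can start in such a run, so that all values are at most `L + 1`
  (`Ctx.S_cross_le`), which is impossible.
* If `w` is `0^l` or `(k-1)^l`, a window across such a multiple is still an increment, or it
  equals one of the `n - 1` windows across `k ^ (N + l - 1)` (`Ctx.z_cross`, `Ctx.q_cross`). These
  `n - 1` windows are pairwise distinct and are not increments (`Ctx.new_windows`).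

Hence the number of factors with maximum `N` exceeds the number with maximum `N - 1` by `n - 1` if
`w` is `0^l` or `(k-1)^l`, and by `0` otherwise.
-/

/-- Number of occurrences of `w` as a contiguous factor of `y`
(number of starting positions `0 ≤ i ≤ |y|-1` where `w` occurs). -/
def occ (w y : List ℕ) : ℕ :=
  ((List.range y.length).filter (fun i => w.isPrefixOf (y.drop i))).length

/-- Base-`k` representation of `m`, most significant digit first, with `(0)_k = 0`. -/
def rep (k m : ℕ) : List ℕ := if m = 0 then [0] else (Nat.digits k m).reverse

/-- The `(k,w)`-digital sequence: number of occurrences of `w` in `(m)_k`. -/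
def dseq (k : ℕ) (w : List ℕ) (m : ℕ) : ℕ := occ w (rep k m)

/-- The set of factors of length `n` of the sequence `a` all of whose letters are `≤ N`. -/
def factorSet (a : ℕ → ℕ) (n N : ℕ) : Set (List ℕ) :=
  { u | (∃ i, u = (List.range n).map fun j => a (i + j)) ∧ ∀ x ∈ u, x ≤ N }

/-- The `N`-factor complexity `P_a(n,N)`. -/
noncomputable def Pc (a : ℕ → ℕ) (n N : ℕ) : ℕ := Nat.card (factorSet a n N)

/-- `F_a^{(1)}(n,N) = F_a(n,N) \ F_a(n,N-1)`. -/
def factorSet1 (a : ℕ → ℕ) (n N : ℕ) : Set (List ℕ) :=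
  factorSet a n N \ factorSet a n (N - 1)

/-- First difference of the `N`-factor complexity in the variable `N`. -/
noncomputable def Pc1 (a : ℕ → ℕ) (n N : ℕ) : ℤ := (Pc a n N : ℤ) - (Pc a n (N - 1) : ℤ)

/-- Second difference of the `N`-factor complexity in the variable `N`. -/
noncomputable def Pc2 (a : ℕ → ℕ) (n N : ℕ) : ℤ := Pc1 a n N - Pc1 a n (N - 1)

/-- The morphism `τ` on single letters: `τ(2i) = (2i)(2i+1)`, `τ(2i+1) = (2i+2)`. -/
def tauLetter (m : ℕ) : List ℕ := if m % 2 = 0 then [m, m + 1] else [m + 1]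

/-- The morphism `τ` extended to finite words by concatenation. -/
def tauWord (u : List ℕ) : List ℕ := u.flatMap tauLetter

/-- Fibonacci numbers with `F_0 = F_1 = 1`. -/
def fibW : ℕ → ℕ
  | 0 => 1
  | 1 => 1
  | n + 2 => fibW (n + 1) + fibW n

/-- `φ(n) = max {k : F_k < n}`. -/
noncomputable def phi (n : ℕ) : ℕ := sSup {k | fibW k < n}

/-- The infinite Fibonacci sequence `f = τ^∞(0)`: since `τ^{p}(0)` is a prefix of
`τ^{p+1}(0)` and `|τ^{n+1}(0)| = F_{n+2} > n`, the `n`-th letter of the fixed point is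
the `n`-th letter of `τ^{n+1}(0)`. -/
def fibSeq (n : ℕ) : ℕ := (tauWord^[n + 1] [0]).getD n 0

/-- The set of factors of length `n` of a finite word `u` all of whose letters are `≤ N`. -/
def factorSetW (u : List ℕ) (n N : ℕ) : Set (List ℕ) :=
  { v | v.length = n ∧ v <:+: u ∧ ∀ x ∈ v, x ≤ N }

/-! ### Padded digits and occurrences of a pattern -/

/-- The digit of `m` in position `j` in base `k` (least significant digit in position `0`), where all
positions above the leading digit are filled with the padding letter `c`. In particular all digits
of `0` are `c`. -/
def padDig (k c m j : ℕ) : ℕ := if m < k ^ j then c else m / k ^ j % k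

/-- The pattern `W 0, …, W (l - 1)` (least significant letter first) occurs in the digit sequence
`f` with its lowest letter in position `j`. -/
def OccAt (l : ℕ) (W f : ℕ → ℕ) (j : ℕ) : Prop := ∀ e < l, f (j + e) = W e

instance (l : ℕ) (W f : ℕ → ℕ) : DecidablePred (OccAt l W f) := fun j =>
  inferInstanceAs (Decidable (∀ e < l, f (j + e) = W e))

/-- The number of occurrences in `f` of the pattern `W` of length `l` that start (at their lowest
letter) in a position `< J`. Such occurrences may reach beyond position `J`. -/
def cnt (l : ℕ) (W : ℕ → ℕ) (J : ℕ) (f : ℕ → ℕ) : ℕ := Nat.count (OccAt l W f) J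

/-- The number of occurrences of the pattern `W` of length `l` in the digits of `m` padded by `c`.
Under `Ctx` no occurrence starts in a padded position, so the bound `m`, which is at least the
number of digits of `m`, captures all of them; see `Ctx.S_eq`. -/
def wcount (k l c : ℕ) (W : ℕ → ℕ) (m : ℕ) : ℕ := cnt l W m (padDig k c m)

/-- Standing assumptions: `W` is a nonempty pattern of base-`k` digits of length `l`, and `c` is a
padding letter different from the most significant letter of the pattern, so that padding creates
no occurrence. The padding is `0`, or it is `k - 1` when the pattern begins with `0`. -/
structure Ctx (k l c : ℕ) (W : ℕ → ℕ) : Prop where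
  hk : 2 ≤ k
  hl : 1 ≤ l
  hW : ∀ e < l, W e < k
  htop : W (l - 1) ≠ c
  hc : c = 0 ∨ (c = k - 1 ∧ W (l - 1) = 0)

/-! ### Counting occurrences in a digit sequence -/

section count
variable {l : ℕ} {W : ℕ → ℕ}

lemma cnt_add (a b : ℕ) (f : ℕ → ℕ) :
    cnt l W (a + b) f = cnt l W a f + cnt l W b (fun j => f (a + j)) := by
  unfold cnt
  rw [Nat.count_add]
  congr 1
  simp only [Nat.count_eq_card_filter_range]
  congr 1
  apply Finset.filter_congr
  intro x _
  simp only [OccAt, add_assoc]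

lemma cnt_congr_occ {J : ℕ} {f g : ℕ → ℕ} (h : ∀ j < J, (OccAt l W f j ↔ OccAt l W g j)) :
    cnt l W J f = cnt l W J g := by
  unfold cnt
  simp only [Nat.count_eq_card_filter_range]
  congr 1
  apply Finset.filter_congr
  intro x hx
  exact h x (Finset.mem_range.1 hx)

lemma cnt_congr {J : ℕ} {f g : ℕ → ℕ} (h : ∀ j, j + 1 < J + l → f j = g j) :
    cnt l W J f = cnt l W J g := by
  apply cnt_congr_occ
  intro j hj
  unfold OccAt
  refine forall₂_congr fun e he => ?_
  rw [h (j + e) (by omega)]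

lemma cnt_le (J : ℕ) (f : ℕ → ℕ) : cnt l W J f ≤ J := Nat.count_le _

lemma cnt_zero (f : ℕ → ℕ) : cnt l W 0 f = 0 := by simp [cnt]

lemma cnt_eq_zero {J : ℕ} {f : ℕ → ℕ} (h : ∀ j < J, ¬ OccAt l W f j) : cnt l W J f = 0 := by
  unfold cnt
  rw [Nat.count_eq_card_filter_range, Finset.card_eq_zero, Finset.filter_eq_empty_iff]
  intro j hj
  exact h j (Finset.mem_range.1 hj)

lemma cnt_eq_self {J : ℕ} {f : ℕ → ℕ} (h : ∀ j < J, OccAt l W f j) : cnt l W J f = J := by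
  unfold cnt
  rw [Nat.count_eq_card_filter_range, Finset.filter_true_of_mem, Finset.card_range]
  intro j hj
  exact h j (Finset.mem_range.1 hj)

lemma cnt_one (f : ℕ → ℕ) : cnt l W 1 f = if OccAt l W f 0 then 1 else 0 := by
  unfold cnt
  simp [Nat.count_succ]

lemma occAt_shift {f : ℕ → ℕ} (a j : ℕ) :
    OccAt l W (fun x => f (a + x)) j ↔ OccAt l W f (a + j) := by
  simp only [OccAt, add_assoc]

lemma cnt_eq_zero_of_top {c J : ℕ} {f : ℕ → ℕ} (hl : 1 ≤ l) (ht : W (l - 1) ≠ c)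
    (h : ∀ j < J, f (j + (l - 1)) = c) : cnt l W J f = 0 := by
  apply cnt_eq_zero
  intro j hj ho
  exact ht ((ho (l - 1) (by omega)).symm.trans (h j hj))

/-- A pattern that is not constantly `d` starts at most once within a maximal run of `d`: its lowest
letter different from `d` must meet the end `r` of the run. -/
lemma cnt_run {d r : ℕ} {f : ℕ → ℕ} (h : ∀ j < r, f j = d) (hr : f r ≠ d)
    (hW : ∃ p < l, W p ≠ d) : cnt l W (r + 1) f ≤ 1 := by
  classical
  have hmin := Nat.find_spec hW
  have hlt : ∀ e < Nat.find hW, W e = d := fun e he => by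
    by_contra hne
    exact Nat.find_min hW he ⟨by omega, hne⟩
  have key : ∀ j < r + 1, OccAt l W f j → j + Nat.find hW = r := by
    intro j hj ho
    have h1 : r ≤ j + Nat.find hW := by
      by_contra hcon
      exact hmin.2 ((ho _ hmin.1).symm.trans (h _ (by omega)))
    by_contra hne
    have h2 := ho (r - j) (by omega)
    rw [hlt (r - j) (by omega), show j + (r - j) = r by omega] at h2
    exact hr h2
  unfold cnt
  rw [Nat.count_eq_card_filter_range, Finset.card_le_one]
  intro a ha b hb
  simp only [Finset.mem_filter, Finset.mem_range] at ha hb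
  have := key a ha.1 ha.2
  have := key b hb.1 hb.2
  omega

/-- If `f` is `c^l` below a copy of `W`, no occurrence of `W` starts inside `c^l`: the lowest letter
of `W` different from `c` would meet `c^l` or a lower letter of the copy, and both are `c`. -/
lemma no_self_overlap {c : ℕ} {f : ℕ → ℕ} (h1 : ∀ j < l, f j = c)
    (h2 : ∀ j < l, f (l + j) = W j) (hW : ∃ p < l, W p ≠ c) : cnt l W l f = 0 := by
  classical
  have hmin := Nat.find_spec hW
  have hlt : ∀ e < Nat.find hW, W e = c := fun e he => by
    by_contra hne
    exact Nat.find_min hW he ⟨by omega, hne⟩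
  apply cnt_eq_zero
  intro j hj ho
  have h3 := ho _ hmin.1
  by_cases h4 : j + Nat.find hW < l
  · exact hmin.2 (h3.symm.trans (h1 _ h4))
  · have h5 := h2 (j + Nat.find hW - l) (by omega)
    rw [show l + (j + Nat.find hW - l) = j + Nat.find hW by omega, h3,
      hlt (j + Nat.find hW - l) (by omega)] at h5
    exact hmin.2 h5

/-! ### Occurrences of a constant pattern -/

/-- An occurrence of the constant pattern `d^l` cannot cover a position carrying another letter. -/
lemma occ_block {d r j : ℕ} {f : ℕ → ℕ} (hd : ∀ e < l, W e = d) (hr : f r ≠ d) (hj : j ≤ r)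
    (ho : OccAt l W f j) : j + l ≤ r := by
  by_contra hcon
  have := ho (r - j) (by omega)
  rw [show j + (r - j) = r by omega, hd _ (by omega)] at this
  exact hr this

/-- Counts of a constant pattern below a blocking position `r` depend only on the letters below
`r`. -/
lemma cnt_block {d r J : ℕ} {f g : ℕ → ℕ} (hd : ∀ e < l, W e = d) (hf : f r ≠ d) (hg : g r ≠ d)
    (hfg : ∀ j < r, f j = g j) (hJ : J ≤ r + 1) : cnt l W J f = cnt l W J g := by
  apply cnt_congr_occ
  intro j hj
  constructor
  · intro ho e he
    have := occ_block hd hf (by omega) ho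
    rw [← hfg _ (by omega)]
    exact ho e he
  · intro ho e he
    have := occ_block hd hg (by omega) ho
    rw [hfg _ (by omega)]
    exact ho e he

lemma cnt_trunc {d r A J : ℕ} {f : ℕ → ℕ} (hd : ∀ e < l, W e = d) (hf : f r ≠ d)
    (hA : r < A + l) (hAJ : A ≤ J) (hJ : J ≤ r + 1) : cnt l W J f = cnt l W A f := by
  obtain ⟨x, rfl⟩ := Nat.exists_eq_add_of_le hAJ
  rw [cnt_add, cnt_eq_zero (J := x), add_zero]
  intro j hj ho
  rw [occAt_shift] at ho
  have := occ_block hd hf (by omega) ho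
  omega

lemma cnt_block_le {d r : ℕ} {f : ℕ → ℕ} (hl : 1 ≤ l) (hd : ∀ e < l, W e = d) (hf : f r ≠ d) :
    cnt l W r f ≤ r + 1 - l := by
  rw [cnt_trunc (A := r + 1 - l) hd hf (by omega) (by omega) (by omega)]
  exact cnt_le _ _

lemma cnt_block_eq {d r : ℕ} {f : ℕ → ℕ} (hl : 1 ≤ l) (hd : ∀ e < l, W e = d) (hf : f r ≠ d)
    (h : ∀ j < r, f j = d) : cnt l W r f = r + 1 - l := by
  rw [cnt_trunc (A := r + 1 - l) hd hf (by omega) (by omega) (by omega)]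
  apply cnt_eq_self
  intro j hj e he
  rw [hd e he, h _ (by omega)]

/-- Lengthening by one letter a run of `d` that already has length at least `l - 1` below a blocking
position adds exactly one occurrence of `d^l`. -/
lemma cnt_grow {d r A : ℕ} {f g : ℕ → ℕ} (hl : 1 ≤ l) (hd : ∀ e < l, W e = d)
    (hfg : ∀ j < r, f j = g j) (hg : g r ≠ d) (hf : f (r + 1) ≠ d) (hA : A + l = r + 1)
    (hrun : ∀ j, A ≤ j → j < A + l → f j = d) : cnt l W (r + 1) f = cnt l W r g + 1 := by
  rw [cnt_trunc (A := A + 1) hd hf (by omega) (by omega) (by omega),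
    cnt_trunc (A := A) hd hg (by omega) (by omega) (by omega), cnt_add,
    cnt_congr (f := f) (g := g) (fun j hj => hfg j (by omega))]
  congr 1
  rw [cnt_one, if_pos]
  intro e he
  rw [hd e he]
  exact hrun _ (by omega) (by omega)

end count

/-! ### Padded digits of `b * k ^ J + y` and `b * k ^ J - y` -/

section digits
variable {k c : ℕ}

lemma padDig_shift (hk : 2 ≤ k) (m J j : ℕ) :
    padDig k c m (J + j) = padDig k c (m / k ^ J) j := by
  unfold padDig
  have : 0 < k ^ J := Nat.pow_pos (by omega)
  simp only [Nat.div_div_eq_div_mul, ← pow_add, Nat.div_lt_iff_lt_mul this, add_comm j J]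

lemma padDig_eq {m j : ℕ} (h : k ^ j ≤ m ∨ c = 0) : padDig k c m j = m / k ^ j % k := by
  unfold padDig
  split_ifs with h1
  · rcases h with h | h
    · omega
    · rw [Nat.div_eq_of_lt h1, h, Nat.zero_mod]
  · rfl

lemma padDig_of_lt {m j : ℕ} (h : m < k ^ j) : padDig k c m j = c := if_pos h

lemma low_dig (hk : 2 ≤ k) (b r : ℕ) {j J : ℕ} (h : j < J) :
    (b * k ^ J + r) / k ^ j % k = r / k ^ j % k := by
  obtain ⟨x, rfl⟩ := Nat.exists_eq_add_of_lt h
  have : 0 < k ^ j := Nat.pow_pos (by omega)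
  rw [show b * k ^ (j + x + 1) + r = r + (b * k ^ x * k) * k ^ j by ring,
    Nat.add_mul_div_right _ _ this, Nat.add_mul_mod_self_right]

lemma mod_dig (hk : 2 ≤ k) (m : ℕ) {j J : ℕ} (h : j < J) :
    (m % k ^ J) / k ^ j % k = m / k ^ j % k := by
  conv_rhs => rw [← Nat.div_add_mod' m (k ^ J)]
  rw [low_dig hk _ _ h]

lemma padDig_const (hc : c < k) (j : ℕ) : padDig k c c j = c := by
  unfold padDig
  split_ifs with h
  · rfl
  · rcases j with _ | j
    · simp [Nat.mod_eq_of_lt hc]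
    · exfalso
      apply h
      calc c < k := hc
        _ ≤ k ^ (j + 1) := Nat.le_self_pow (by omega) k

lemma padDig_plus (hk : 2 ≤ k) {b y j J : ℕ} (hb : 1 ≤ b) (hj : j < J) :
    padDig k c (b * k ^ J + y) j = y / k ^ j % k := by
  rw [padDig_eq, low_dig hk _ _ hj]
  left
  have : k ^ j ≤ k ^ J := Nat.pow_le_pow_right (by omega) hj.le
  nlinarith [Nat.zero_le y, Nat.mul_le_mul_right (k ^ J) hb]

/-- Below `k ^ J` by a small amount `y ≤ k ^ L`, all digits in positions `L ≤ j < J` are `k - 1`. -/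
lemma dig_sub_run (hk : 2 ≤ k) {y j J L : ℕ} (hy : 1 ≤ y) (hyL : y ≤ k ^ L) (hL : L ≤ j)
    (hj : j < J) : (k ^ J - y) / k ^ j % k = k - 1 := by
  have h1 : k ^ L ≤ k ^ j := Nat.pow_le_pow_right (by omega) hL
  have h0 : 0 < k ^ j := Nat.pow_pos (by omega)
  obtain ⟨x, rfl⟩ := Nat.exists_eq_add_of_lt hj
  have hx : 1 ≤ k ^ x := Nat.one_le_pow _ _ (by omega)
  obtain ⟨z, hz⟩ := Nat.exists_eq_add_of_le hx
  have h2 : k ^ (j + x + 1) - y = (k ^ j - y) + ((k - 1) + z * k) * k ^ j := by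
    obtain ⟨w, rfl⟩ := Nat.exists_eq_add_of_le hk
    have : (2 + w) ^ (j + x + 1) = (2 + w) ^ j + ((2 + w - 1) + z * (2 + w)) * (2 + w) ^ j := by
      rw [pow_add, pow_add, hz, show 2 + w - 1 = 1 + w by omega]; ring
    omega
  rw [h2, Nat.add_mul_div_right _ _ h0, Nat.div_eq_of_lt (by omega), zero_add,
    Nat.add_mul_mod_self_right, Nat.mod_eq_of_lt (by omega)]

lemma sub_decomp {b y J : ℕ} (hb : 1 ≤ b) (hy : y ≤ k ^ J) :
    b * k ^ J - y = (b - 1) * k ^ J + (k ^ J - y) := by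
  obtain ⟨x, rfl⟩ := Nat.exists_eq_add_of_le hb
  rw [Nat.add_sub_cancel_left, add_mul, one_mul]
  omega

lemma minus_div {b y J : ℕ} (hk : 2 ≤ k) (hb : 1 ≤ b) (hy1 : 1 ≤ y) (hy : y ≤ k ^ J) :
    (b * k ^ J - y) / k ^ J = b - 1 := by
  have h0 : 0 < k ^ J := Nat.pow_pos (by omega)
  rw [sub_decomp hb hy, add_comm, Nat.add_mul_div_right _ _ h0, Nat.div_eq_of_lt (by omega),
    zero_add]

lemma plus_div {b y J : ℕ} (hk : 2 ≤ k) (hy : y < k ^ J) : (b * k ^ J + y) / k ^ J = b := by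
  have h0 : 0 < k ^ J := Nat.pow_pos (by omega)
  rw [add_comm, Nat.add_mul_div_right _ _ h0, Nat.div_eq_of_lt hy, zero_add]

lemma pow_sub_ge (hk : 2 ≤ k) {y j J L : ℕ} (hyL : y ≤ k ^ L) (hL : L < J) (hj : j < J) :
    k ^ j ≤ k ^ J - y := by
  obtain ⟨x, rfl⟩ : ∃ x, J = x + 1 := ⟨J - 1, by omega⟩
  have h1 : k ^ L ≤ k ^ x := Nat.pow_le_pow_right (by omega) (by omega)
  have h2 : k ^ j ≤ k ^ x := Nat.pow_le_pow_right (by omega) (by omega)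
  have h3 : 2 * k ^ x ≤ k ^ (x + 1) := by rw [pow_succ, mul_comm]; exact Nat.mul_le_mul_left _ hk
  omega

lemma padDig_minus (hk : 2 ≤ k) {b y j J L : ℕ} (hb : 1 ≤ b)
    (hyL : y ≤ k ^ L) (hL : L < J ∨ (L ≤ J ∧ c = 0)) (hj : j < J) :
    padDig k c (b * k ^ J - y) j = (k ^ J - y) / k ^ j % k := by
  have hLJ : k ^ L ≤ k ^ J := Nat.pow_le_pow_right (by omega) (by omega)
  rw [padDig_eq, sub_decomp hb (hyL.trans hLJ), low_dig hk _ _ hj]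
  rcases hL with hL | hL
  · left
    rw [sub_decomp hb (hyL.trans hLJ)]
    exact (pow_sub_ge hk hyL hL hj).trans (Nat.le_add_left _ _)
  · exact Or.inr hL.2

lemma padDig_minus_run (hk : 2 ≤ k) {b y j J L : ℕ} (hb : 1 ≤ b) (hy : 1 ≤ y)
    (hyL : y ≤ k ^ L) (hL : L ≤ j) (hj : j < J) :
    padDig k c (b * k ^ J - y) j = k - 1 := by
  rw [padDig_minus hk hb hyL (Or.inl (by omega)) hj, dig_sub_run hk hy hyL hL hj]

lemma dig_zero (hk : 2 ≤ k) {y j L : ℕ} (hyL : y < k ^ L) (hL : L ≤ j) : y / k ^ j % k = 0 := by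
  rw [Nat.div_eq_of_lt (hyL.trans_le (Nat.pow_le_pow_right (by omega) hL)), Nat.zero_mod]

lemma dig_mul_sub (hk : 2 ≤ k) {y j J L : ℕ} (hyL : y ≤ k ^ L) (hj : j < L) (hJ : L ≤ J) :
    (k ^ J - y) / k ^ j % k = (k ^ L - y) / k ^ j % k := by
  have h : k ^ J - y = (k ^ (J - L) - 1) * k ^ L + (k ^ L - y) := by
    rw [← sub_decomp (Nat.one_le_pow _ _ (by omega)) hyL, ← pow_add, Nat.sub_add_cancel hJ]
  rw [h, low_dig hk _ _ hj]

end digits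

/-! ### The number of occurrences in a padded number -/

lemma wcount_zero (k l c : ℕ) (W : ℕ → ℕ) : wcount k l c W 0 = 0 := cnt_zero _

namespace Ctx
variable {k l c : ℕ} {W : ℕ → ℕ}

lemma c_lt (h : Ctx k l c W) : c < k := by
  have := h.hk
  rcases h.hc with h1 | h1 <;> omega

lemma S_eq_aux (h : Ctx k l c W) {m T x : ℕ} (hm : m < k ^ T) :
    cnt l W (T + x) (padDig k c m) = cnt l W T (padDig k c m) := by
  have hk := h.hk
  rw [cnt_add, cnt_eq_zero_of_top (J := x) h.hl h.htop, add_zero]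
  intro j _
  exact padDig_of_lt (hm.trans_le (Nat.pow_le_pow_right (by omega) (by omega)))

/-- Any number of positions covering all digits of `m` may be used to compute `wcount`. -/
lemma S_eq (h : Ctx k l c W)
    {m T : ℕ} (hm : m < k ^ T) : wcount k l c W m = cnt l W T (padDig k c m) := by
  have hk := h.hk
  unfold wcount
  have h1 : m < k ^ m := Nat.lt_pow_self (by omega)
  rw [← h.S_eq_aux (x := T) h1, ← h.S_eq_aux (x := m) hm, add_comm]

lemma S_congr (h : Ctx k l c W) {m m' : ℕ} (hm : ∀ j, padDig k c m j = padDig k c m' j) :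
    wcount k l c W m = wcount k l c W m' := by
  have hk := h.hk
  have h1 : m < k ^ (m + m') := (Nat.lt_pow_self (by omega)).trans_le
    (Nat.pow_le_pow_right (by omega) (by omega))
  have h2 : m' < k ^ (m + m') := (Nat.lt_pow_self (by omega)).trans_le
    (Nat.pow_le_pow_right (by omega) (by omega))
  rw [h.S_eq h1, h.S_eq h2, show padDig k c m = padDig k c m' from funext hm]

/-- The count is additive over cutting off the lowest `J` digits: the first summand counts the
occurrences starting there, including those that reach into the upper part. -/
lemma S_split (h : Ctx k l c W) (m J : ℕ) :
    wcount k l c W m = cnt l W J (padDig k c m) + wcount k l c W (m / k ^ J) := by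
  have hk := h.hk
  have h1 : m < k ^ m := Nat.lt_pow_self (by omega)
  have h2 : m < k ^ (J + m) := h1.trans_le (Nat.pow_le_pow_right (by omega) (by omega))
  have h3 : m / k ^ J < k ^ m := (Nat.div_le_self _ _).trans_lt h1
  rw [h.S_eq h2, h.S_eq h3, cnt_add]
  congr 2
  funext j
  exact padDig_shift hk _ _ _

lemma S_eq_zero_of_const (h : Ctx k l c W)
    {m : ℕ} (hm : ∀ j, padDig k c m j = c) : wcount k l c W m = 0 :=
  cnt_eq_zero_of_top h.hl h.htop (fun _ _ => hm _)

lemma S_c (h : Ctx k l c W) : wcount k l c W c = 0 := h.S_eq_zero_of_const (padDig_const h.c_lt)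

lemma S_le (h : Ctx k l c W) (m J : ℕ) : wcount k l c W m ≤ J + wcount k l c W (m / k ^ J) := by
  rw [h.S_split m J]
  have := cnt_le (l := l) (W := W) J (padDig k c m)
  omega

lemma S_le_of_lt (h : Ctx k l c W) {m J : ℕ} (hm : m < k ^ J) : wcount k l c W m ≤ J := by
  have := h.S_le m J
  rwa [Nat.div_eq_of_lt hm, wcount_zero, add_zero] at this

/-- Every digit sequence that is eventually `c` is the padded digit sequence of a number. The second
conclusion keeps the number nonzero when `c ≠ 0`, since then appending a digit `0` to the number
`0` would be lost. -/
lemma exists_padDig (h : Ctx k l c W)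
    {Q : ℕ} : ∀ {g : ℕ → ℕ}, (∀ j, g j < k) → (∀ j, Q ≤ j → g j = c) →
    ∃ x, (∀ j, padDig k c x j = g j) ∧ (c = 0 ∨ x ≠ 0) := by
  have hk := h.hk
  induction Q with
  | zero =>
    intro g _ hg
    refine ⟨c, fun j => ?_, by omega⟩
    rw [padDig_const h.c_lt, hg j (by omega)]
  | succ Q ih =>
    intro g hgk hg
    obtain ⟨y, hy, hy0⟩ := ih (g := fun j => g (j + 1)) (fun j => hgk _)
      (fun j hj => hg _ (by omega))
    have hdiv : (y * k + g 0) / k ^ 1 = y := by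
      rw [pow_one, add_comm, Nat.add_mul_div_right _ _ (by omega), Nat.div_eq_of_lt (hgk 0),
        zero_add]
    have hpos : c = 0 ∨ 1 ≤ y * k + g 0 := by
      rcases hy0 with h0 | h0
      · exact Or.inl h0
      · right
        have : 1 * 1 ≤ y * k := Nat.mul_le_mul (by omega) (by omega)
        omega
    refine ⟨y * k + g 0, fun j => ?_, by omega⟩
    rcases j with _ | j
    · rw [padDig_eq (by simpa using hpos.symm), pow_zero, Nat.div_one, add_comm,
        Nat.add_mul_mod_self_right, Nat.mod_eq_of_lt (hgk 0)]
    · rw [add_comm j 1, padDig_shift hk, hdiv, hy, add_comm]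

/-- Prepending the digits `c w c^l` to all numbers of a window adds exactly one occurrence of the
pattern. The copy of `c^l` separates the new occurrence from the old digits and acts on them like
the padding. When `c ≠ 0` all numbers of the window must have the same number of digits `T`. -/
lemma increase (h : Ctx k l c W)
    {i n T : ℕ} (hT : i + n ≤ k ^ T) (hi : c = 0 ∨ ∃ T', T = T' + 1 ∧ k ^ T' ≤ i) :
    ∃ i', ∀ e < n, wcount k l c W (i' + e) = wcount k l c W (i + e) + 1 := by
  have hk := h.hk
  have hl := h.hl
  have hck := h.c_lt
  obtain ⟨x, hx, -⟩ := h.exists_padDig (Q := 2 * l)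
    (g := fun j => if l ≤ j ∧ j < 2 * l then W (j - l) else c)
    (fun j => by
      split_ifs with hj
      · exact h.hW _ (by omega)
      · exact hck)
    (fun j hj => if_neg (by omega))
  -- `x` has the padded digits `… c c W c^l`.
  refine ⟨x * k ^ T + i, fun e he => ?_⟩
  have hlt : i + e < k ^ T := by omega
  have hdiv : (x * k ^ T + i + e) / k ^ T = x := by
    rw [add_assoc]; exact plus_div hk hlt
  have hlow : ∀ j < T, padDig k c (x * k ^ T + i + e) j = padDig k c (i + e) j := by
    intro j hj
    have h1 : k ^ j ≤ i + e ∨ c = 0 := by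
      rcases hi with hi | ⟨T', rfl, hi⟩
      · exact Or.inr hi
      · left
        have : k ^ j ≤ k ^ T' := Nat.pow_le_pow_right (by omega) (by omega)
        omega
    have h2 : k ^ j ≤ x * k ^ T + i + e ∨ c = 0 := by
      rcases h1 with h1 | h1
      · left; rw [add_assoc]; exact h1.trans (Nat.le_add_left _ _)
      · exact Or.inr h1
    rw [padDig_eq h1, padDig_eq h2, add_assoc, low_dig hk _ _ hj]
  have hx2 : wcount k l c W x = 1 := by
    have h1 : wcount k l c W (x / k ^ (l + 1)) = 0 := by
      rw [h.S_split _ l, cnt_eq_zero_of_top (c := c) hl h.htop, zero_add]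
      · apply h.S_eq_zero_of_const
        intro j
        rw [← padDig_shift hk, ← padDig_shift hk, hx, if_neg (by omega)]
      · intro j hj
        rw [← padDig_shift hk, hx, if_neg (by omega)]
    rw [h.S_split x (l + 1), h1, cnt_add, no_self_overlap (c := c), cnt_one, if_pos]
    · intro e he
      simp only [zero_add]
      rw [hx, if_pos (by omega), Nat.add_sub_cancel_left]
    · intro j hj
      rw [hx, if_neg (by omega)]
    · intro j hj
      rw [hx, if_pos (by omega), Nat.add_sub_cancel_left]
    · exact ⟨l - 1, by omega, h.htop⟩
  rw [h.S_split (x * k ^ T + i + e) T, hdiv, hx2, h.S_eq hlt]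
  congr 1
  apply cnt_congr
  intro j hj
  by_cases hjT : j < T
  · exact hlow j hjT
  · obtain ⟨y, rfl⟩ := Nat.exists_eq_add_of_le (not_lt.1 hjT)
    rw [padDig_shift hk, hdiv, hx, if_neg (by omega), padDig_of_lt]
    exact hlt.trans_le (Nat.pow_le_pow_right (by omega) (by omega))

/-- If the numbers of a window share a prefix `P` containing the pattern, then cutting this prefix
inside its topmost occurrence, and replacing the first letter of that occurrence by the padding
letter, removes exactly one occurrence from every number of the window. -/
lemma decrease (h : Ctx k l c W)
    {i n J P : ℕ} (hP : ∀ e < n, (i + e) / k ^ J = P) (hS : 1 ≤ wcount k l c W P) :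
    ∃ i', ∀ e < n, wcount k l c W (i + e) = wcount k l c W (i' + e) + 1 := by
  classical
  have hk := h.hk
  have hl := h.hl
  have hck := h.c_lt
  rcases Nat.eq_zero_or_pos n with rfl | hn
  · exact ⟨0, fun e he => by omega⟩
  -- The topmost occurrence starts in position `j0` of `P`, where `j0 + 1` is the least shift that
  -- removes all occurrences.
  have hex : ∃ j, wcount k l c W (P / k ^ j) = 0 := by
    refine ⟨P, ?_⟩
    rw [Nat.div_eq_of_lt (Nat.lt_pow_self (by omega)), wcount_zero]
  have hj := Nat.find_spec hex
  obtain ⟨j0, hj0⟩ : ∃ j0, Nat.find hex = j0 + 1 := by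
    refine ⟨Nat.find hex - 1, ?_⟩
    have : Nat.find hex ≠ 0 := by
      intro h0
      rw [h0, pow_zero, Nat.div_one] at hj
      omega
    omega
  have hmin : wcount k l c W (P / k ^ j0) ≠ 0 := Nat.find_min hex (by omega)
  rw [hj0] at hj
  generalize hQ : P / k ^ j0 = Q at hmin
  have hQk : wcount k l c W (Q / k ^ 1) = 0 := by
    rw [← hQ, Nat.div_div_eq_div_mul, ← pow_add]; exact hj
  have hsplit := h.S_split Q 1
  rw [hQk, add_zero, cnt_one] at hsplit
  have hocc : OccAt l W (padDig k c Q) 0 := by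
    by_contra hcon
    rw [if_neg hcon] at hsplit
    exact hmin hsplit
  rw [if_pos hocc] at hsplit
  set R := J + j0 with hR
  have hPQ : ∀ e < n, (i + e) / k ^ R = Q := by
    intro e he
    rw [hR, pow_add, ← Nat.div_div_eq_div_mul, hP e he, hQ]
  set T := R + (l - 1) with hT
  have hTdiv : ∀ e < n, (i + e) / k ^ T = i / k ^ T := by
    intro e he
    have h1 := hPQ e he
    have h2 := hPQ 0 hn
    rw [add_zero] at h2
    rw [hT, pow_add, ← Nat.div_div_eq_div_mul, h1, ← Nat.div_div_eq_div_mul, h2]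
  have hTmod : ∀ e < n, (i + e) % k ^ T = i % k ^ T + e := by
    intro e he
    have h1 := Nat.div_add_mod (i + e) (k ^ T)
    have h2 := Nat.div_add_mod i (k ^ T)
    rw [hTdiv e he] at h1
    omega
  -- Position `T` carries the first letter of the topmost occurrence; the digits below are kept.
  refine ⟨c * k ^ T + i % k ^ T, fun e he => ?_⟩
  rw [add_assoc, ← hTmod e he]
  generalize hm : i + e = m
  have hmQ : m / k ^ R = Q := hm ▸ hPQ e he
  have hkT : 0 < k ^ T := Nat.pow_pos (by omega)
  have hdiv : (c * k ^ T + m % k ^ T) / k ^ T = c := plus_div hk (Nat.mod_lt _ hkT)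
  have hmT : k ^ T ≤ m ∨ c = 0 := by
    left
    by_contra hcon
    have h1 := hocc (l - 1) (by omega)
    rw [zero_add, ← hmQ, ← padDig_shift hk, ← hT, padDig_of_lt (by omega)] at h1
    exact h.htop h1.symm
  have hlow : ∀ j < T, padDig k c (c * k ^ T + m % k ^ T) j = padDig k c m j := by
    intro j hj
    have hjT : k ^ j ≤ k ^ T := Nat.pow_le_pow_right (by omega) hj.le
    rw [padDig_eq (m := m) (hmT.imp_left hjT.trans), padDig_eq, low_dig hk _ _ hj, mod_dig hk _ hj]
    rcases Nat.eq_zero_or_pos c with h0 | h0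
    · exact Or.inr h0
    · left
      have := Nat.mul_le_mul_right (k ^ T) (show 1 ≤ c from h0)
      rw [one_mul] at this
      exact hjT.trans (this.trans (Nat.le_add_right _ _))
  rw [h.S_split m R, hmQ, hsplit, h.S_split (c * k ^ T + m % k ^ T) T, hdiv, h.S_c, add_zero]
  congr 1
  conv_rhs => rw [hT, cnt_add]
  rw [cnt_eq_zero_of_top (J := l - 1) (c := c) hl h.htop, add_zero]
  · apply cnt_congr
    intro j hj
    exact (hlow j (by omega)).symm
  · intro j hj
    rw [show R + (j + (l - 1)) = T + j by omega, padDig_shift hk]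
    rw [hdiv, padDig_const hck]

end Ctx

/-- A window of length `n ≤ k ^ L` either lies in a block of length `k ^ L`, or there is a carry into
some position `j ≥ L` at the multiple `b * k ^ j`, and the carry goes no further: `b - 1` and `b`
differ only in their lowest digit. In both cases `P` is the prefix shared by all numbers. -/
lemma window_cases {k : ℕ} (hk : 2 ≤ k) {i n L : ℕ} (hn : 1 ≤ n) (hL : n ≤ k ^ L) :
    ∃ J P, (∀ e < n, (i + e) / k ^ J = P) ∧ (J = L ∨ ∃ J' b, L ≤ J' ∧ J = J' + 1 ∧ 1 ≤ b ∧
      b % k ≠ 0 ∧ (b - 1) % k ≠ k - 1 ∧ b / k = P ∧ (b - 1) / k = P ∧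
      i < b * k ^ J' ∧ b * k ^ J' < i + n) := by
  classical
  have hex : ∃ x, i / k ^ (L + x) = (i + (n - 1)) / k ^ (L + x) := by
    refine ⟨i + n, ?_⟩
    have h1 : i + n < k ^ (L + (i + n)) := (Nat.lt_pow_self (by omega : 1 < k)).trans_le
      (Nat.pow_le_pow_right (by omega) (by omega))
    rw [Nat.div_eq_of_lt (by omega), Nat.div_eq_of_lt (by omega)]
  have hx := Nat.find_spec hex
  refine ⟨L + Nat.find hex, i / k ^ (L + Nat.find hex), ?_, ?_⟩
  · intro e he
    apply le_antisymm
    · rw [hx]; exact Nat.div_le_div_right (by omega)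
    · exact Nat.div_le_div_right (by omega)
  · rcases Nat.eq_zero_or_pos (Nat.find hex) with h0 | h0
    · left; omega
    · right
      have hmin := Nat.find_min hex (m := Nat.find hex - 1) (by omega)
      generalize Nat.find hex = x at *
      obtain ⟨z, rfl⟩ : ∃ z, x = z + 1 := ⟨x - 1, by omega⟩
      rw [Nat.add_sub_cancel] at hmin
      have hpos : 0 < k ^ (L + z) := Nat.pow_pos (by omega)
      have hLz : k ^ L ≤ k ^ (L + z) := Nat.pow_le_pow_right (by omega) (by omega)
      set K := k ^ (L + z) with hK
      have hb : (i + (n - 1)) / K = i / K + 1 := by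
        have h1 : i / K ≤ (i + (n - 1)) / K := Nat.div_le_div_right (by omega)
        have h2 : (i + (n - 1)) / K ≤ (i + K) / K := Nat.div_le_div_right (by omega)
        rw [Nat.add_div_right _ hpos] at h2
        omega
      rw [show L + (z + 1) = L + z + 1 by omega, pow_succ, ← hK, ← Nat.div_div_eq_div_mul,
        ← Nat.div_div_eq_div_mul, hb] at hx
      rw [show L + (z + 1) = L + z + 1 by omega, pow_succ, ← hK, ← Nat.div_div_eq_div_mul]
      refine ⟨L + z, i / K + 1, by omega, by omega, Nat.le_add_left _ _, ?_, ?_, hx.symm, rfl, ?_, ?_⟩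
      · intro h0
        have h1 := Nat.div_add_mod (i / K) k
        have h2 := Nat.div_add_mod (i / K + 1) k
        have h3 := Nat.mod_lt (i / K) (show 0 < k by omega)
        rw [← hx, h0] at h2
        omega
      · intro h0
        rw [Nat.add_sub_cancel] at h0
        have h1 := Nat.div_add_mod (i / K) k
        have h2 := Nat.div_add_mod (i / K + 1) k
        have h3 := Nat.mod_lt (i / K + 1) (show 0 < k by omega)
        rw [← hx] at h2
        omega
      · have h1 := Nat.div_add_mod' i K
        have h2 := Nat.mod_lt i hpos
        rw [← hK, add_mul]
        omega
      · rw [← hK]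
        have := Nat.div_mul_le_self (i + (n - 1)) K
        rw [hb] at this
        omega

namespace Ctx
variable {k l c : ℕ} {W : ℕ → ℕ}

/-! ### Windows across a carry -/

lemma S_div_one (h : Ctx k l c W) (b : ℕ) (hb : ¬ OccAt l W (padDig k c b) 0) :
    wcount k l c W b = wcount k l c W (b / k) := by
  have := h.S_split b 1
  rwa [cnt_one, if_neg hb, zero_add, pow_one] at this

lemma S_div_one_le (h : Ctx k l c W) (b : ℕ) : wcount k l c W b ≤ 1 + wcount k l c W (b / k) := by
  have := h.S_le b 1
  rwa [pow_one] at this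

/-- For a pattern that is constant neither with letter `0` nor with letter `k - 1`, values near a
carry at `b * k ^ J` are small: the `L` lowest positions start at most `L` occurrences, and by
`cnt_run` the run of `0` or `k - 1` above them, with the digit that ends it, starts at most one. -/
lemma S_cross_le (h : Ctx k l c W)
    (h0 : ∃ p < l, W p ≠ 0) (h1 : ∃ p < l, W p ≠ k - 1) {m b y J L : ℕ}
    (hJ : L ≤ J) (hb : 1 ≤ b) (hb0 : b % k ≠ 0) (hb1 : (b - 1) % k ≠ k - 1)
    (hbk : (b - 1) / k = b / k)
    (hm : (1 ≤ y ∧ y ≤ k ^ L ∧ m = b * k ^ J - y) ∨ (y < k ^ L ∧ m = b * k ^ J + y)) :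
    wcount k l c W m ≤ L + 1 + wcount k l c W (b / k) := by
  have hk := h.hk
  have hLJ : k ^ L ≤ k ^ J := Nat.pow_le_pow_right (by omega) hJ
  obtain ⟨r, rfl⟩ := Nat.exists_eq_add_of_le hJ
  have hle := h.S_le m L
  have hsplit := h.S_split (m / k ^ L) (r + 1)
  rw [Nat.div_div_eq_div_mul, ← pow_add, ← add_assoc L r 1, pow_succ,
    ← Nat.div_div_eq_div_mul] at hsplit
  have hcnt : wcount k l c W (m / k ^ L) ≤ 1 + wcount k l c W (b / k) := by
    rcases hm with ⟨hy1, hy, rfl⟩ | ⟨hy, rfl⟩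
    · have hd : (b * k ^ (L + r) - y) / k ^ (L + r) = b - 1 :=
        minus_div hk hb hy1 (hy.trans hLJ)
      have hrun : ∀ j < r, padDig k c ((b * k ^ (L + r) - y) / k ^ L) j = k - 1 := by
        intro j hj
        rw [← padDig_shift hk, padDig_minus_run hk hb hy1 hy (by omega) (by omega)]
      have hr : padDig k c ((b * k ^ (L + r) - y) / k ^ L) r = padDig k c (b - 1) 0 := by
        rw [← padDig_shift hk, ← add_zero (L + r), padDig_shift hk, add_zero, hd]
      -- The run of `k - 1` has no end exactly when `b = 1` and the padding is `k - 1`.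
      by_cases hc : padDig k c (b - 1) 0 = k - 1
      · have hb' : b - 1 < k ^ 0 := by
          by_contra hcon
          rw [padDig_eq (Or.inl (by omega)), pow_zero, Nat.div_one] at hc
          exact hb1 hc
        rw [padDig_of_lt hb'] at hc
        rw [h.S_eq_zero_of_const]
        · omega
        · intro j
          rcases Nat.lt_or_ge j r with hj | hj
          · rw [hrun j hj, hc]
          · obtain ⟨x, rfl⟩ := Nat.exists_eq_add_of_le hj
            rw [← padDig_shift hk, ← add_assoc, padDig_shift hk, hd, padDig_of_lt]
            rw [pow_zero] at hb'
            exact hb'.trans_le (Nat.one_le_pow _ _ (by omega))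
      · rw [hsplit, hd, hbk]
        have := cnt_run hrun (hr ▸ hc) h1
        omega
    · have hd : (b * k ^ (L + r) + y) / k ^ (L + r) = b := plus_div hk (by omega)
      rw [hsplit, hd]
      have hr : padDig k c ((b * k ^ (L + r) + y) / k ^ L) r ≠ 0 := by
        rw [← padDig_shift hk, ← add_zero (L + r), padDig_shift hk, add_zero, hd,
          padDig_eq (Or.inl (by simpa using hb)), pow_zero, Nat.div_one]
        exact hb0
      have hrun : ∀ j < r, padDig k c ((b * k ^ (L + r) + y) / k ^ L) j = 0 := by
        intro j hj
        rw [← padDig_shift hk, padDig_plus hk hb (by omega), dig_zero hk hy (by omega)]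
      have := cnt_run hrun hr h0
      omega
  omega

/-- With padding `k - 1`, a number slightly below `k ^ J` reads as an infinite run of `k - 1` from
position `L` on. -/
lemma pow_minus_const (h : Ctx k l c W)
    (hc : c = k - 1) {y J L : ℕ} (hJ : L ≤ J) (hy1 : 1 ≤ y) (hy : y ≤ k ^ L)
    {j : ℕ} (hj : L ≤ j) : padDig k c (k ^ J - y) j = k - 1 := by
  have hk := h.hk
  have hLJ : k ^ L ≤ k ^ J := Nat.pow_le_pow_right (by omega) hJ
  rcases Nat.lt_or_ge j J with hjJ | hjJ
  · have := padDig_minus_run (c := c) hk (b := 1) le_rfl hy1 hy hj hjJ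
    rwa [one_mul] at this
  · rw [padDig_of_lt, hc]
    have : k ^ J ≤ k ^ j := Nat.pow_le_pow_right (by omega) hjJ
    have : 0 < k ^ J := Nat.pow_pos (by omega)
    omega

lemma S_pow_minus_le (h : Ctx k l c W)
    (hc : c = k - 1) {y J L : ℕ} (hJ : L ≤ J) (hy1 : 1 ≤ y) (hy : y ≤ k ^ L) :
    wcount k l c W (k ^ J - y) ≤ L := by
  have := h.S_le (k ^ J - y) L
  have h0 : wcount k l c W ((k ^ J - y) / k ^ L) = 0 := by
    apply h.S_eq_zero_of_const
    intro j
    rw [← padDig_shift h.hk, h.pow_minus_const hc hJ hy1 hy (by omega), hc]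
  omega

lemma z_at (h : Ctx k l c W) {b J y : ℕ} (hb0 : b % k ≠ 0) (hy : y < k ^ J) :
    padDig k c (b * k ^ J + y) J ≠ 0 := by
  have hk := h.hk
  have hb : 1 ≤ b := by
    by_contra hcon
    rw [show b = 0 by omega] at hb0
    simp at hb0
  have := padDig_shift (c := c) hk (b * k ^ J + y) J 0
  rw [add_zero, plus_div hk hy] at this
  rwa [this, padDig_eq (Or.inl (by simpa using hb)), pow_zero, Nat.div_one]

lemma z_at_one (h : Ctx k l c W) {J y : ℕ} (hy : y < k ^ J) : padDig k c (k ^ J + y) J ≠ 0 := by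
  have hk := h.hk
  have := h.z_at (b := 1) (by rw [Nat.mod_eq_of_lt (by omega)]; omega) hy
  rwa [one_mul] at this

lemma z_low_one (h : Ctx k l c W)
    {J y j : ℕ} (hj : j < J) : padDig k c (k ^ J + y) j = y / k ^ j % k := by
  have := padDig_plus (c := c) h.hk (b := 1) (y := y) le_rfl hj
  rwa [one_mul] at this

/-! ### The pattern `0^l`

The lemmas named `z_…` treat the pattern consisting of `l` zeros; here the padding is `k - 1`. -/

lemma z_c (h : Ctx k l c W) (hz : ∀ e < l, W e = 0) : c = k - 1 := by
  rcases h.hc with h1 | h1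
  · exact absurd ((hz _ (by have := h.hl; omega)).trans h1.symm) h.htop
  · exact h1.1

lemma z_div (h : Ctx k l c W) (hz : ∀ e < l, W e = 0)
    {b : ℕ} (hb0 : b % k ≠ 0) : wcount k l c W b = wcount k l c W (b / k) := by
  have hk := h.hk
  have hl := h.hl
  apply h.S_div_one
  intro ho
  have := ho 0 (by omega)
  have hb : 1 ≤ b := by
    by_contra hcon
    rw [show b = 0 by omega] at hb0
    simp at hb0
  rw [hz 0 (by omega), add_zero, padDig_eq (Or.inl (by simpa using hb)), pow_zero,
    Nat.div_one] at this
  exact hb0 this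

lemma z_one (h : Ctx k l c W) (hz : ∀ e < l, W e = 0) : wcount k l c W 1 = 0 := by
  have hk := h.hk
  rw [h.z_div hz (by rw [Nat.mod_eq_of_lt (by omega)]; omega), Nat.div_eq_of_lt (by omega),
    wcount_zero]

lemma z_cnt (h : Ctx k l c W) (hz : ∀ e < l, W e = 0) {J y : ℕ} (hy : y < k ^ J) :
    wcount k l c W (k ^ J + y) = cnt l W J (padDig k c (k ^ J + y)) := by
  have := plus_div h.hk (b := 1) hy
  rw [one_mul] at this
  rw [h.S_split _ J, this, h.z_one hz, add_zero]

/-- Above a multiple `b * k ^ J` with `b % k ≠ 0`, the prefix `b` contributes additively. -/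
lemma z_plus (h : Ctx k l c W) (hz : ∀ e < l, W e = 0)
    {b J y : ℕ} (hb0 : b % k ≠ 0) (hy : y < k ^ J) :
    wcount k l c W (b * k ^ J + y) = wcount k l c W (k ^ J + y) + wcount k l c W b := by
  have hk := h.hk
  have hb : 1 ≤ b := by
    by_contra hcon
    rw [show b = 0 by omega] at hb0
    simp at hb0
  rw [h.S_split _ J, plus_div hk hy, h.z_cnt hz hy]
  congr 1
  apply cnt_block hz (h.z_at hb0 hy) (h.z_at_one hy) _ (Nat.le_succ _)
  intro j hj
  rw [padDig_plus hk hb hj, h.z_low_one hj]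

/-- Below a multiple `b * k ^ J`, the prefix `b - 1` contributes additively, because the digit in
position `J - 1` is `k - 1`. -/
lemma z_minus (h : Ctx k l c W) (hz : ∀ e < l, W e = 0)
    {b J y L : ℕ} (hb : 1 ≤ b) (hy1 : 1 ≤ y) (hy : y ≤ k ^ L) (hJ : L < J) :
    wcount k l c W (b * k ^ J - y) = wcount k l c W (k ^ J - y) + wcount k l c W (b - 1) := by
  have hk := h.hk
  have hLJ : k ^ L ≤ k ^ J := Nat.pow_le_pow_right (by omega) hJ.le
  have h1 := minus_div hk (b := 1) le_rfl hy1 (hy.trans hLJ)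
  rw [one_mul] at h1
  rw [h.S_split _ J, minus_div hk hb hy1 (hy.trans hLJ), h.S_split (k ^ J - y) J, h1,
    wcount_zero, add_zero]
  congr 1
  have hr1 : padDig k c (b * k ^ J - y) (J - 1) = k - 1 :=
    padDig_minus_run hk hb hy1 hy (by omega) (by omega)
  have hr2 : padDig k c (k ^ J - y) (J - 1) = k - 1 := by
    have := padDig_minus_run (c := c) hk (b := 1) le_rfl hy1 hy
      (show L ≤ J - 1 by omega) (show J - 1 < J by omega)
    rwa [one_mul] at this
  apply cnt_block hz (r := J - 1) (by omega) (by omega) _ (by omega)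
  intro j hj
  have h2 := padDig_minus (c := c) hk (b := 1) le_rfl hy (Or.inl hJ) (show j < J by omega)
  rw [one_mul] at h2
  rw [h2, padDig_minus hk hb hy (Or.inl hJ) (by omega)]

lemma z_grow (h : Ctx k l c W) (hz : ∀ e < l, W e = 0)
    {J y L : ℕ} (hy : y < k ^ L) (hJ : L + l ≤ J + 1) :
    wcount k l c W (k ^ (J + 1) + y) = wcount k l c W (k ^ J + y) + 1 := by
  have hk := h.hk
  have hl := h.hl
  have hyJ : y < k ^ J := hy.trans_le (Nat.pow_le_pow_right (by omega) (by omega))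
  have hyJ1 : y < k ^ (J + 1) := hy.trans_le (Nat.pow_le_pow_right (by omega) (by omega))
  rw [h.z_cnt hz hyJ, h.z_cnt hz hyJ1]
  apply cnt_grow (A := J + 1 - l) hl hz _ (h.z_at_one hyJ) (h.z_at_one hyJ1) (by omega)
  · intro j hj1 hj2
    rw [h.z_low_one (by omega), dig_zero hk hy (by omega)]
  · intro j hj
    rw [h.z_low_one (by omega), h.z_low_one hj]

lemma z_minus_grow (h : Ctx k l c W) (hz : ∀ e < l, W e = 0)
    {J y L : ℕ} (hy1 : 1 ≤ y) (hy : y ≤ k ^ L) (hJ : L < J) :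
    wcount k l c W (k ^ (J + 1) - y) = wcount k l c W (k ^ J - y) := by
  have hk := h.hk
  apply h.S_congr
  intro j
  rcases Nat.lt_or_ge j L with hj | hj
  · have h1 := padDig_minus (c := c) hk (b := 1) le_rfl hy (Or.inl hJ) (show j < J by omega)
    have h2 := padDig_minus (c := c) hk (b := 1) (J := J + 1) le_rfl hy (Or.inl (by omega))
      (show j < J + 1 by omega)
    rw [one_mul] at h1 h2
    rw [h1, h2, dig_mul_sub hk hy hj (show L ≤ J + 1 by omega),
      dig_mul_sub hk hy hj (show L ≤ J by omega)]
  · rw [h.pow_minus_const (h.z_c hz) (by omega) hy1 hy hj,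
      h.pow_minus_const (h.z_c hz) (by omega) hy1 hy hj]

lemma z_le (h : Ctx k l c W) (hz : ∀ e < l, W e = 0)
    {J y : ℕ} (hy : y < k ^ J) : wcount k l c W (k ^ J + y) ≤ J + 1 - l := by
  rw [h.z_cnt hz hy]
  exact cnt_block_le h.hl hz (h.z_at_one hy)

lemma z_pow (h : Ctx k l c W) (hz : ∀ e < l, W e = 0)
    (J : ℕ) : wcount k l c W (k ^ J) = J + 1 - l := by
  have hk := h.hk
  have h0 : 0 < k ^ J := Nat.pow_pos (by omega)
  have h1 := h.z_cnt hz h0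
  have h2 := h.z_at_one h0
  rw [add_zero] at h1 h2
  rw [h1]
  apply cnt_block_eq h.hl hz h2
  intro j hj
  have h3 := h.z_low_one (y := 0) hj
  rwa [add_zero, Nat.zero_div, Nat.zero_mod] at h3

lemma z_minus_one (h : Ctx k l c W) (hz : ∀ e < l, W e = 0)
    (J : ℕ) : wcount k l c W (k ^ J - 1) = 0 := by
  have := h.S_pow_minus_le (h.z_c hz) (Nat.zero_le J) le_rfl (by simp)
  omega

/-- A window across `k ^ J` can be increased by one when `J` is large: lengthening the run of zeros
adds an occurrence only at and above the power, and the prefix `k ^ l + 1` adds the missing one below,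
because `k ^ l` contains the pattern and `k ^ l + 1` does not. -/
lemma z_increase (h : Ctx k l c W) (hz : ∀ e < l, W e = 0)
    {J t n L : ℕ} (hn : n ≤ k ^ L) (hJ : L + l ≤ J) (ht : t < n) :
    ∃ i', ∀ e < n, wcount k l c W (i' + e) = wcount k l c W (k ^ J - t + e) + 1 := by
  have hk := h.hk
  have hl := h.hl
  have hLJ : k ^ L ≤ k ^ J := Nat.pow_le_pow_right (by omega) (by omega)
  have hJJ : k ^ J ≤ k ^ (J + 1) := Nat.pow_le_pow_right (by omega) (by omega)
  have hkl : k ^ l = k ^ (l - 1) * k := by rw [← pow_succ, Nat.sub_add_cancel hl]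
  have hmod : (k ^ l + 1) % k = 1 := by
    rw [hkl, add_comm, Nat.add_mul_mod_self_right, Nat.mod_eq_of_lt (by omega)]
  have hdiv : (k ^ l + 1) / k = k ^ (l - 1) := by
    rw [hkl, add_comm, Nat.add_mul_div_right _ _ (by omega), Nat.div_eq_of_lt (by omega), zero_add]
  have hb : wcount k l c W (k ^ l + 1) = 0 := by
    rw [h.z_div hz (by omega), hdiv, h.z_pow hz]
    omega
  have hb1 : wcount k l c W (k ^ l) = 1 := by
    rw [h.z_pow hz]
    omega
  have hX : k ^ (J + 1) ≤ (k ^ l + 1) * k ^ (J + 1) := Nat.le_mul_of_pos_left _ (by omega)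
  refine ⟨(k ^ l + 1) * k ^ (J + 1) - t, fun e he => ?_⟩
  rcases Nat.lt_or_ge e t with het | het
  · rw [show (k ^ l + 1) * k ^ (J + 1) - t + e = (k ^ l + 1) * k ^ (J + 1) - (t - e) by omega,
      h.z_minus hz (L := L) (by omega) (by omega) (by omega) (by omega),
      h.z_minus_grow hz (L := L) (by omega) (by omega) (by omega), Nat.add_sub_cancel, hb1,
      show k ^ J - t + e = k ^ J - (t - e) by omega]
  · rw [show (k ^ l + 1) * k ^ (J + 1) - t + e = (k ^ l + 1) * k ^ (J + 1) + (e - t) by omega,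
      h.z_plus hz (by omega) (by omega), hb, h.z_grow hz (L := L) (by omega) (by omega), add_zero,
      show k ^ J - t + e = k ^ J + (e - t) by omega]

/-- A window across a carry at `b * k ^ J` whose maximum is the large value `N`, and whose shared
prefix `b / k` does not contain the pattern, attains its maximum at `b * k ^ J`, which forces
`J = N + l - 1`. If `b - 1` contains the pattern, the window is an increment of the window placed
likewise at `k ^ (J - 1)`; otherwise it equals the window placed likewise at `k ^ J`. -/
lemma z_cross (h : Ctx k l c W) (hz : ∀ e < l, W e = 0)
    {i n N L J b : ℕ} (hn : n ≤ k ^ L) (hN : L + 2 ≤ N)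
    (hmax : ∀ e < n, wcount k l c W (i + e) ≤ N) (hex : ∃ e < n, wcount k l c W (i + e) = N)
    (hJ : L ≤ J) (hb0 : b % k ≠ 0) (hbk : (b - 1) / k = b / k)
    (hi : i < b * k ^ J) (hi' : b * k ^ J < i + n) (hP : wcount k l c W (b / k) = 0) :
    (∃ i', ∀ e < n, wcount k l c W (i + e) = wcount k l c W (i' + e) + 1) ∨
    ∃ t, 1 ≤ t ∧ t < n ∧
      ∀ e < n, wcount k l c W (i + e) = wcount k l c W (k ^ (N + l - 1) - t + e) := by
  have hk := h.hk
  have hl := h.hl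
  have hLJ : k ^ L ≤ k ^ J := Nat.pow_le_pow_right (by omega) hJ
  have hb : 1 ≤ b := by
    by_contra hcon
    rw [show b = 0 by omega] at hb0
    simp at hb0
  have hSb : wcount k l c W b = 0 := by rw [h.z_div hz hb0, hP]
  have hSb1 : wcount k l c W (b - 1) ≤ 1 := by
    have := h.S_div_one_le (b - 1)
    rwa [hbk, hP] at this
  have hfirst : ∀ y, 1 ≤ y → y ≤ k ^ L → wcount k l c W (b * k ^ J - y) ≤ L + 1 := by
    intro y hy1 hy
    rcases Nat.eq_or_lt_of_le hJ with rfl | hJ'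
    · have := h.S_le (b * k ^ L - y) L
      rw [minus_div hk hb hy1 hy] at this
      omega
    · rw [h.z_minus hz hb hy1 hy hJ']
      have := h.S_pow_minus_le (h.z_c hz) hJ hy1 hy
      omega
  obtain ⟨e0, he0, hSe0⟩ := hex
  have he0X : b * k ^ J ≤ i + e0 := by
    by_contra hcon
    have := hfirst (b * k ^ J - (i + e0)) (by omega) (by omega)
    rw [show b * k ^ J - (b * k ^ J - (i + e0)) = i + e0 by omega] at this
    omega
  have hJN : J = N + l - 1 := by
    have h1 := h.z_plus hz (J := J) (y := i + e0 - b * k ^ J) hb0 (by omega)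
    rw [show b * k ^ J + (i + e0 - b * k ^ J) = i + e0 by omega, hSe0, hSb] at h1
    have h2 := h.z_le hz (J := J) (y := i + e0 - b * k ^ J) (by omega)
    have h3 := hmax (b * k ^ J - i) (by omega)
    have h4 := h.z_plus hz (J := J) (y := 0) hb0 (by omega)
    rw [add_zero, add_zero, h.z_pow hz] at h4
    rw [show i + (b * k ^ J - i) = b * k ^ J by omega, h4] at h3
    omega
  have hcase : wcount k l c W (b - 1) = 0 ∨ wcount k l c W (b - 1) = 1 := by omega
  obtain ⟨J1, rfl⟩ : ∃ J1, J = J1 + 1 := ⟨J - 1, by omega⟩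
  have hLJ1 : k ^ L ≤ k ^ J1 := Nat.pow_le_pow_right (by omega) (by omega)
  rcases hcase with h0 | h1
  · right
    refine ⟨b * k ^ (J1 + 1) - i, by omega, by omega, fun e he => ?_⟩
    rw [← hJN]
    rcases Nat.lt_or_ge (i + e) (b * k ^ (J1 + 1)) with hlt | hge
    · have := h.z_minus hz (J := J1 + 1) (y := b * k ^ (J1 + 1) - (i + e)) (L := L) hb (by omega)
        (by omega) (by omega)
      rw [show b * k ^ (J1 + 1) - (b * k ^ (J1 + 1) - (i + e)) = i + e by omega, h0] at this
      rw [this, add_zero]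
      congr 1
      omega
    · have := h.z_plus hz (J := J1 + 1) (y := i + e - b * k ^ (J1 + 1)) hb0 (by omega)
      rw [show b * k ^ (J1 + 1) + (i + e - b * k ^ (J1 + 1)) = i + e by omega, hSb] at this
      rw [this, add_zero]
      congr 1
      omega
  · left
    refine ⟨k ^ J1 - (b * k ^ (J1 + 1) - i), fun e he => ?_⟩
    rcases Nat.lt_or_ge (i + e) (b * k ^ (J1 + 1)) with hlt | hge
    · have := h.z_minus hz (J := J1 + 1) (y := b * k ^ (J1 + 1) - (i + e)) (L := L) hb (by omega)
        (by omega) (by omega)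
      rw [show b * k ^ (J1 + 1) - (b * k ^ (J1 + 1) - (i + e)) = i + e by omega, h1,
        h.z_minus_grow hz (L := L) (by omega) (by omega) (by omega)] at this
      rw [this]
      congr 2
      omega
    · have := h.z_plus hz (J := J1 + 1) (y := i + e - b * k ^ (J1 + 1)) hb0 (by omega)
      rw [show b * k ^ (J1 + 1) + (i + e - b * k ^ (J1 + 1)) = i + e by omega, hSb,
        h.z_grow hz (L := L) (by omega) (by omega)] at this
      rw [this, add_zero]
      congr 2
      omega

end Ctx

/-! ### The pattern `(k-1)^l`

The lemmas named `q_…` treat the pattern consisting of `l` letters `k - 1`; here the padding is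
`0`. -/

namespace Ctx
variable {k l c : ℕ} {W : ℕ → ℕ}

lemma q_c (h : Ctx k l c W) (hz : ∀ e < l, W e = k - 1) : c = 0 := by
  have hl := h.hl
  have hk := h.hk
  rcases h.hc with h1 | h1
  · exact h1
  · have := hz (l - 1) (by omega)
    omega

lemma q_dig (h : Ctx k l c W) (hz : ∀ e < l, W e = k - 1)
    (m j : ℕ) : padDig k c m j = m / k ^ j % k := padDig_eq (Or.inr (h.q_c hz))

lemma q_div (h : Ctx k l c W) (hz : ∀ e < l, W e = k - 1)
    {b : ℕ} (hb : b % k ≠ k - 1) : wcount k l c W b = wcount k l c W (b / k) := by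
  have hl := h.hl
  apply h.S_div_one
  intro ho
  have := ho 0 (by omega)
  rw [hz 0 (by omega), h.q_dig hz, add_zero, pow_zero, Nat.div_one] at this
  exact hb this

lemma q_at (h : Ctx k l c W) (hz : ∀ e < l, W e = k - 1)
    {b y J : ℕ} (hb : 1 ≤ b) (hb1 : (b - 1) % k ≠ k - 1) (hy1 : 1 ≤ y) (hy : y ≤ k ^ J) :
    padDig k c (b * k ^ J - y) J ≠ k - 1 := by
  rwa [h.q_dig hz, minus_div h.hk hb hy1 hy]

lemma q_at_one (h : Ctx k l c W) (hz : ∀ e < l, W e = k - 1)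
    {y J : ℕ} (hy1 : 1 ≤ y) (hy : y ≤ k ^ J) :
    padDig k c (k ^ J - y) J ≠ k - 1 := by
  have hk := h.hk
  have := h.q_at hz (b := 1) le_rfl (by simp; omega) hy1 hy
  rwa [one_mul] at this

lemma q_cnt (h : Ctx k l c W) {y J : ℕ} (hy1 : 1 ≤ y) :
    wcount k l c W (k ^ J - y) = cnt l W J (padDig k c (k ^ J - y)) := by
  have : 0 < k ^ J := Nat.pow_pos (by have := h.hk; omega)
  exact h.S_eq (by omega)

/-- Below a multiple `b * k ^ J` with `(b - 1) % k ≠ k - 1`, the prefix `b - 1` contributes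
additively. -/
lemma q_minus (h : Ctx k l c W) (hz : ∀ e < l, W e = k - 1)
    {b y J : ℕ} (hb : 1 ≤ b) (hb1 : (b - 1) % k ≠ k - 1) (hy1 : 1 ≤ y)
    (hy : y ≤ k ^ J) :
    wcount k l c W (b * k ^ J - y) = wcount k l c W (k ^ J - y) + wcount k l c W (b - 1) := by
  have hk := h.hk
  rw [h.S_split _ J, minus_div hk hb hy1 hy, h.q_cnt hy1]
  congr 1
  apply cnt_block hz (h.q_at hz hb hb1 hy1 hy) (h.q_at_one hz hy1 hy) _ (Nat.le_succ _)
  intro j hj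
  rw [h.q_dig hz, h.q_dig hz, sub_decomp hb hy, low_dig hk _ _ hj]

/-- Above a multiple `b * k ^ J`, the prefix `b` contributes additively, because the digit in
position `J - 1` is `0`. -/
lemma q_plus (h : Ctx k l c W) (hz : ∀ e < l, W e = k - 1)
    {b y J L : ℕ} (hy : y < k ^ L) (hJ : L < J) :
    wcount k l c W (b * k ^ J + y) = wcount k l c W y + wcount k l c W b := by
  have hk := h.hk
  have hyJ : y < k ^ J := hy.trans_le (Nat.pow_le_pow_right (by omega) hJ.le)
  rw [h.S_split _ J, plus_div hk hyJ, h.S_eq hyJ]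
  congr 1
  have h0 : y / k ^ (J - 1) % k = 0 := dig_zero hk hy (by omega)
  apply cnt_block hz (r := J - 1) _ _ _ (by omega)
  · rw [h.q_dig hz, low_dig hk _ _ (by omega), h0]; omega
  · rw [h.q_dig hz, h0]; omega
  · intro j hj
    rw [h.q_dig hz, h.q_dig hz, low_dig hk _ _ (by omega)]

lemma q_plus_le (h : Ctx k l c W) (hz : ∀ e < l, W e = k - 1)
    {b y L J : ℕ} (hy : y < k ^ L) (hJ : L ≤ J) (hb : wcount k l c W b ≤ 1) :
    wcount k l c W (b * k ^ J + y) ≤ L + 1 := by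
  rcases Nat.eq_or_lt_of_le hJ with rfl | hJ
  · have := h.S_le (b * k ^ L + y) L
    rw [plus_div h.hk hy] at this
    omega
  · rw [h.q_plus hz hy hJ]
    have := h.S_le_of_lt hy
    omega

lemma q_grow (h : Ctx k l c W) (hz : ∀ e < l, W e = k - 1)
    {y J L : ℕ} (hy1 : 1 ≤ y) (hy : y ≤ k ^ L) (hJ : L + l ≤ J + 1) :
    wcount k l c W (k ^ (J + 1) - y) = wcount k l c W (k ^ J - y) + 1 := by
  have hk := h.hk
  have hl := h.hl
  have hLJ : k ^ L ≤ k ^ J := Nat.pow_le_pow_right (by omega) (by omega)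
  have hLJ1 : k ^ L ≤ k ^ (J + 1) := Nat.pow_le_pow_right (by omega) (by omega)
  rw [h.q_cnt hy1, h.q_cnt hy1]
  apply cnt_grow (A := J + 1 - l) hl hz _ (h.q_at_one hz hy1 (hy.trans hLJ))
    (h.q_at_one hz hy1 (hy.trans hLJ1)) (by omega)
  · intro j hj1 hj2
    rw [h.q_dig hz, dig_sub_run hk hy1 hy (by omega) (by omega)]
  · intro j hj
    rw [h.q_dig hz, h.q_dig hz, dig_mul_sub hk (hy.trans hLJ) hj (by omega)]

lemma q_le (h : Ctx k l c W) (hz : ∀ e < l, W e = k - 1) {y J : ℕ} (hy1 : 1 ≤ y) (hy : y ≤ k ^ J) :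
    wcount k l c W (k ^ J - y) ≤ J + 1 - l := by
  rw [h.q_cnt hy1]
  exact cnt_block_le h.hl hz (h.q_at_one hz hy1 hy)

lemma q_pow (h : Ctx k l c W) (hz : ∀ e < l, W e = k - 1)
    (J : ℕ) : wcount k l c W (k ^ J - 1) = J + 1 - l := by
  have hk := h.hk
  have h0 : 1 ≤ k ^ J := Nat.one_le_pow _ _ (by omega)
  rw [h.q_cnt le_rfl]
  apply cnt_block_eq h.hl hz (h.q_at_one hz le_rfl h0)
  intro j hj
  rw [h.q_dig hz, dig_sub_run hk (L := 0) le_rfl (by simp) (by omega) hj]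

lemma q_one_le (h : Ctx k l c W) : wcount k l c W 1 ≤ 1 :=
  h.S_le_of_lt (by have := h.hk; rw [pow_one]; omega)

/-- The number `1` contains the pattern only in the case of the binary sum of digits. This case is
exceptional because the leading digit of `k ^ J` is then itself an occurrence. -/
lemma q_special (h : Ctx k l c W) (hz : ∀ e < l, W e = k - 1)
    (h1 : wcount k l c W 1 ≠ 0) : k = 2 ∧ l = 1 := by
  have hk := h.hk
  have hl := h.hl
  have h2 := h.S_split 1 1
  rw [pow_one, Nat.div_eq_of_lt (by omega), wcount_zero, cnt_one, add_zero] at h2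
  have ho : OccAt l W (padDig k c 1) 0 := by
    by_contra hcon
    rw [if_neg hcon] at h2
    exact h1 h2
  have h3 := ho 0 (by omega)
  rw [hz 0 (by omega), h.q_dig hz, add_zero, pow_zero, Nat.div_one,
    Nat.mod_eq_of_lt (by omega)] at h3
  refine ⟨by omega, ?_⟩
  by_contra hne
  have h4 := ho 1 (by omega)
  rw [hz 1 (by omega), h.q_dig hz, zero_add, pow_one, Nat.div_eq_of_lt (by omega),
    Nat.zero_mod] at h4
  omega

lemma q_special_odd (h : Ctx k l c W) (hz : ∀ e < l, W e = k - 1)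
    (h1 : wcount k l c W 1 ≠ 0) {b : ℕ} (hb : b % k ≠ 0) :
    wcount k l c W b ≠ 0 := by
  obtain ⟨hk2, hl1⟩ := h.q_special hz h1
  have hk := h.hk
  rw [h.S_split b 1, cnt_one, if_pos]
  · omega
  · intro e he
    rw [hz e he, h.q_dig hz, show 0 + e = 0 by omega, pow_zero, Nat.div_one]
    have := Nat.mod_lt b (show 0 < k by omega)
    omega

lemma q_special_pos (h : Ctx k l c W) (hz : ∀ e < l, W e = k - 1) (h1 : wcount k l c W 1 ≠ 0) :
    ∀ b, b ≠ 0 → wcount k l c W b ≠ 0 := by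
  have hk := h.hk
  intro b
  induction b using Nat.strong_induction_on with
  | _ b ih =>
    intro hb
    by_cases hbk : b % k = 0
    · have h2 := Nat.div_add_mod b k
      have h3 : b / k < b := Nat.div_lt_self (by omega) (by omega)
      have h4 : b / k ≠ 0 := by
        intro h0
        rw [h0, hbk] at h2
        omega
      have := ih _ h3 h4
      have h5 := h.S_split b 1
      rw [pow_one] at h5
      omega
    · exact h.q_special_odd hz h1 hbk

/-- A window across a carry at `b * k ^ J` whose maximum is the large value `N`, and whose shared
prefix `b / k` does not contain the pattern, attains its maximum at `b * k ^ J - 1`, which forces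
`J = N + l - 1`. If `b` contains the pattern and `1` does not, the window is an increment of the
window placed likewise at `k ^ (J - 1)`; otherwise it equals the window placed likewise at
`k ^ J`. -/
lemma q_cross (h : Ctx k l c W) (hz : ∀ e < l, W e = k - 1)
    {i n N L J b : ℕ} (hn : n ≤ k ^ L) (hN : L + 2 ≤ N)
    (hmax : ∀ e < n, wcount k l c W (i + e) ≤ N) (hex : ∃ e < n, wcount k l c W (i + e) = N)
    (hJ : L ≤ J) (hb0 : b % k ≠ 0) (hb1 : (b - 1) % k ≠ k - 1) (hbk : (b - 1) / k = b / k)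
    (hi : i < b * k ^ J) (hi' : b * k ^ J < i + n) (hP : wcount k l c W (b / k) = 0) :
    (∃ i', ∀ e < n, wcount k l c W (i + e) = wcount k l c W (i' + e) + 1) ∨
    ∃ t, 1 ≤ t ∧ t < n ∧
      ∀ e < n, wcount k l c W (i + e) = wcount k l c W (k ^ (N + l - 1) - t + e) := by
  have hk := h.hk
  have hl := h.hl
  have hLJ : k ^ L ≤ k ^ J := Nat.pow_le_pow_right (by omega) hJ
  have hb : 1 ≤ b := by
    by_contra hcon
    rw [show b = 0 by omega] at hb0
    simp at hb0
  have hSb1 : wcount k l c W (b - 1) = 0 := by rw [h.q_div hz hb1, hbk, hP]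
  have hSb : wcount k l c W b ≤ 1 := by
    have := h.S_div_one_le b
    rwa [hP] at this
  obtain ⟨e0, he0, hSe0⟩ := hex
  have he0X : i + e0 < b * k ^ J := by
    by_contra hcon
    have := h.q_plus_le hz (y := i + e0 - b * k ^ J) (L := L) (by omega) hJ hSb
    rw [show b * k ^ J + (i + e0 - b * k ^ J) = i + e0 by omega] at this
    omega
  have hJN : J = N + l - 1 := by
    have h1 := h.q_minus hz (J := J) (y := b * k ^ J - (i + e0)) hb hb1 (by omega) (by omega)
    rw [show b * k ^ J - (b * k ^ J - (i + e0)) = i + e0 by omega, hSe0, hSb1] at h1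
    have h2 := h.q_le hz (J := J) (y := b * k ^ J - (i + e0)) (by omega) (by omega)
    have h3 := hmax (b * k ^ J - 1 - i) (by omega)
    have h4 := h.q_minus hz (J := J) (y := 1) hb hb1 (by omega) (by omega)
    rw [h.q_pow hz, hSb1] at h4
    rw [show i + (b * k ^ J - 1 - i) = b * k ^ J - 1 by omega, h4] at h3
    omega
  have hone := h.q_one_le
  have hspec : wcount k l c W 1 ≠ 0 → wcount k l c W b ≠ 0 := fun h1 => h.q_special_odd hz h1 hb0
  have hcase : wcount k l c W b = wcount k l c W 1 ∨
      (wcount k l c W b = 1 ∧ wcount k l c W 1 = 0) := by omega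
  obtain ⟨J1, rfl⟩ : ∃ J1, J = J1 + 1 := ⟨J - 1, by omega⟩
  have hLJ1 : k ^ L ≤ k ^ J1 := Nat.pow_le_pow_right (by omega) (by omega)
  rcases hcase with h0 | ⟨h1, h1'⟩
  · right
    refine ⟨b * k ^ (J1 + 1) - i, by omega, by omega, fun e he => ?_⟩
    rw [← hJN]
    rcases Nat.lt_or_ge (i + e) (b * k ^ (J1 + 1)) with hlt | hge
    · have := h.q_minus hz (J := J1 + 1) (y := b * k ^ (J1 + 1) - (i + e)) hb hb1 (by omega)
        (by omega)
      rw [show b * k ^ (J1 + 1) - (b * k ^ (J1 + 1) - (i + e)) = i + e by omega, hSb1] at this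
      rw [this, add_zero]
      congr 1
      omega
    · have h2 := h.q_plus hz (b := b) (J := J1 + 1) (y := i + e - b * k ^ (J1 + 1)) (L := L)
        (by omega) (by omega)
      have h3 := h.q_plus hz (b := 1) (J := J1 + 1) (y := i + e - b * k ^ (J1 + 1)) (L := L)
        (by omega) (by omega)
      rw [show b * k ^ (J1 + 1) + (i + e - b * k ^ (J1 + 1)) = i + e by omega, h0, ← h3,
        one_mul] at h2
      rw [h2]
      congr 1
      omega
  · left
    refine ⟨k ^ J1 - (b * k ^ (J1 + 1) - i), fun e he => ?_⟩
    rcases Nat.lt_or_ge (i + e) (b * k ^ (J1 + 1)) with hlt | hge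
    · have := h.q_minus hz (J := J1 + 1) (y := b * k ^ (J1 + 1) - (i + e)) hb hb1 (by omega)
        (by omega)
      rw [show b * k ^ (J1 + 1) - (b * k ^ (J1 + 1) - (i + e)) = i + e by omega, hSb1,
        h.q_grow hz (L := L) (by omega) (by omega) (by omega)] at this
      rw [this, add_zero]
      congr 2
      omega
    · have h2 := h.q_plus hz (b := b) (J := J1 + 1) (y := i + e - b * k ^ (J1 + 1)) (L := L)
        (by omega) (by omega)
      have h3 := h.q_plus hz (b := 1) (J := J1) (y := i + e - b * k ^ (J1 + 1)) (L := L)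
        (by omega) (by omega)
      rw [show b * k ^ (J1 + 1) + (i + e - b * k ^ (J1 + 1)) = i + e by omega, h1] at h2
      rw [h1', add_zero, one_mul] at h3
      rw [h2, ← h3]
      congr 2
      omega

/-! ### Increasing and decreasing windows by one -/

/-- A window containing a value above `L`, of length at most `k ^ L`, can be increased by one.
Unless `increase` applies, the padding is `k - 1` and the window crosses a power `k ^ J`; values
above `L` then only occur for the pattern `0^l`, where `z_increase` applies. -/
lemma exists_increase (h : Ctx k l c W) {i n L : ℕ} (hn : n ≤ k ^ L)
    (hex : ∃ e < n, L + 1 ≤ wcount k l c W (i + e)) :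
    ∃ i', ∀ e < n, wcount k l c W (i' + e) = wcount k l c W (i + e) + 1 := by
  classical
  have hk := h.hk
  have hl := h.hl
  rcases h.hc with hc | ⟨hc, htop⟩
  · exact h.increase (T := i + n) (Nat.lt_pow_self (by omega)).le (Or.inl hc)
  obtain ⟨e0, he0, hSe0⟩ := hex
  have hexT : ∃ T, i + n ≤ k ^ T := ⟨i + n, (Nat.lt_pow_self (by omega)).le⟩
  have hT := Nat.find_spec hexT
  have hmin : ∀ T, T < Nat.find hexT → k ^ T < i + n := fun T hT => by
    have := Nat.find_min hexT hT
    omega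
  generalize Nat.find hexT = T at hT hmin
  have hLT : L < T := by
    by_contra hcon
    have h1 : k ^ T ≤ k ^ L := Nat.pow_le_pow_right (by omega) (by omega)
    have := h.S_le_of_lt (m := i + e0) (J := L) (by omega)
    omega
  obtain ⟨J, rfl⟩ : ∃ J, T = J + 1 := ⟨T - 1, by omega⟩
  have hJ := hmin J (by omega)
  have hLJ : k ^ L ≤ k ^ J := Nat.pow_le_pow_right (by omega) (by omega)
  by_cases hi : k ^ J ≤ i
  · exact h.increase hT (Or.inr ⟨J, rfl, hi⟩)
  have he0J : k ^ J ≤ i + e0 := by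
    by_contra hcon
    have := h.S_pow_minus_le hc (J := J) (y := k ^ J - (i + e0)) (L := L) (by omega) (by omega)
      (by omega)
    rw [show k ^ J - (k ^ J - (i + e0)) = i + e0 by omega] at this
    omega
  by_cases hz : ∀ e < l, W e = 0
  · have h1 := h.z_le hz (J := J) (y := i + e0 - k ^ J) (by omega)
    rw [show k ^ J + (i + e0 - k ^ J) = i + e0 by omega] at h1
    have h2 := h.z_increase hz (J := J) (t := k ^ J - i) hn (by omega) (by omega)
    rwa [show k ^ J - (k ^ J - i) = i by omega] at h2
  · exfalso
    push Not at hz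
    obtain ⟨p, hp, hWp⟩ := hz
    have h1 := h.S_le (i + e0) L
    have h3 : wcount k l c W ((i + e0) / k ^ L) = 0 := by
      have hdiv : (i + e0) / k ^ J = 1 := by
        have := plus_div hk (b := 1) (J := J) (y := i + e0 - k ^ J) (by omega)
        rwa [one_mul, show k ^ J + (i + e0 - k ^ J) = i + e0 by omega] at this
      have hdig : ∀ j, L ≤ j → j < J → padDig k c (i + e0) j = 0 := by
        intro j hj hjJ
        have := padDig_plus (c := c) hk (b := 1) (J := J) (y := i + e0 - k ^ J) le_rfl hjJ
        rw [one_mul, show k ^ J + (i + e0 - k ^ J) = i + e0 by omega] at this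
        rw [this, dig_zero hk (L := L) (by omega) hj]
      apply cnt_eq_zero
      intro j _ ho
      have htop' := ho (l - 1) (by omega)
      rw [htop, ← padDig_shift hk] at htop'
      by_cases hlt : L + (j + (l - 1)) < J
      · have := ho p hp
        rw [← padDig_shift hk, hdig _ (by omega) (by omega)] at this
        exact hWp this.symm
      · obtain ⟨x, hx⟩ := Nat.exists_eq_add_of_le (not_lt.1 hlt)
        rw [hx, padDig_shift hk, hdiv] at htop'
        rcases x with _ | x
        · rw [padDig_eq (Or.inl (by simp)), pow_zero, Nat.div_one,
            Nat.mod_eq_of_lt (by omega)] at htop'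
          omega
        · rw [padDig_of_lt (Nat.one_lt_pow (by omega) (by omega))] at htop'
          omega
    omega

/-- A window whose maximum `N` is at least `L + 2` can be decreased by one, unless the pattern is
`0^l` or `(k-1)^l` and the window equals one of the `n - 1` windows across `k ^ (N + l - 1)`. -/
lemma exists_decrease (h : Ctx k l c W) {i n L N : ℕ} (hn : n ≤ k ^ L) (hN : L + 2 ≤ N)
    (hmax : ∀ e < n, wcount k l c W (i + e) ≤ N) (hex : ∃ e < n, wcount k l c W (i + e) = N) :
    (∃ i', ∀ e < n, wcount k l c W (i + e) = wcount k l c W (i' + e) + 1) ∨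
    (((∀ e < l, W e = 0) ∨ (∀ e < l, W e = k - 1)) ∧ ∃ t, 1 ≤ t ∧ t < n ∧
      ∀ e < n, wcount k l c W (i + e) = wcount k l c W (k ^ (N + l - 1) - t + e)) := by
  have hk := h.hk
  have hl := h.hl
  obtain ⟨e0, he0, hSe0⟩ := hex
  obtain ⟨J, P, hP, hcase⟩ := window_cases hk (i := i) (by omega) hn
  by_cases hSP : 1 ≤ wcount k l c W P
  · exact Or.inl (h.decrease hP hSP)
  have hSP0 : wcount k l c W P = 0 := by omega
  rcases hcase with rfl | ⟨J', b, hLJ', rfl, hb, hb0, hb1, hbP, hbP', hi, hi'⟩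
  · have := h.S_le (i + e0) J
    rw [hP e0 he0] at this
    omega
  subst hbP
  by_cases hz : ∀ e < l, W e = 0
  · exact (h.z_cross hz hn hN hmax ⟨e0, he0, hSe0⟩ hLJ' hb0 hbP' hi hi' hSP0).imp_right
      fun hx => ⟨Or.inl hz, hx⟩
  by_cases hq : ∀ e < l, W e = k - 1
  · exact (h.q_cross hq hn hN hmax ⟨e0, he0, hSe0⟩ hLJ' hb0 hb1 hbP' hi hi' hSP0).imp_right
      fun hx => ⟨Or.inr hq, hx⟩
  exfalso
  push Not at hz hq
  have hle : wcount k l c W (i + e0) ≤ L + 1 + wcount k l c W (b / k) := by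
    rcases Nat.lt_or_ge (i + e0) (b * k ^ J') with hlt | hge
    · exact h.S_cross_le hz hq hLJ' hb hb0 hb1 hbP' (y := b * k ^ J' - (i + e0))
        (Or.inl ⟨by omega, by omega, by omega⟩)
    · exact h.S_cross_le hz hq hLJ' hb hb0 hb1 hbP' (y := i + e0 - b * k ^ J')
        (Or.inr ⟨by omega, by omega⟩)
  omega

/-- For a constant pattern, the `n - 1` windows across `k ^ (N + l - 1)` have maximum `N`, are
pairwise distinct and are not increments of windows with maximum `N - 1`. They contain a value too
small for an increment: for `0^l` it is the value `0` at `k ^ M - 1`; for `(k-1)^l` it is the value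
at `k ^ M`, which is `0`, or `1` in the case of the binary sum of digits, where only the number `0`
has value `0`. -/
lemma new_windows (h : Ctx k l c W)
    (hconst : (∀ e < l, W e = 0) ∨ (∀ e < l, W e = k - 1)) {n L N : ℕ}
    (hn : n ≤ k ^ L) (hN : L + 2 ≤ N) :
    (∀ t, 1 ≤ t → t < n →
      (∀ e < n, wcount k l c W (k ^ (N + l - 1) - t + e) ≤ N) ∧
      (∃ e < n, wcount k l c W (k ^ (N + l - 1) - t + e) = N) ∧
      ∀ i, (∃ e < n, wcount k l c W (i + e) = N - 1) →
        ¬ ∀ e < n, wcount k l c W (k ^ (N + l - 1) - t + e) = wcount k l c W (i + e) + 1) ∧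
    (∀ t t', 1 ≤ t → t < t' → t' < n →
      ¬ ∀ e < n, wcount k l c W (k ^ (N + l - 1) - t + e) =
        wcount k l c W (k ^ (N + l - 1) - t' + e)) := by
  have hk := h.hk
  have hl := h.hl
  obtain ⟨M, hM⟩ : ∃ M, N + l - 1 = M := ⟨_, rfl⟩
  rw [hM]
  have hLM : k ^ L ≤ k ^ M := Nat.pow_le_pow_right (by omega) (by omega)
  rcases hconst with hz | hq
  · have hlow : ∀ t e, t < n → e < t → wcount k l c W (k ^ M - t + e) ≤ L := by
      intro t e ht he
      have := h.S_pow_minus_le (h.z_c hz) (J := M) (y := t - e) (L := L) (by omega) (by omega)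
        (by omega)
      rwa [show k ^ M - (t - e) = k ^ M - t + e by omega] at this
    have hat : ∀ t, t < n → wcount k l c W (k ^ M - t + t) = N := by
      intro t ht
      rw [show k ^ M - t + t = k ^ M by omega, h.z_pow hz]
      omega
    refine ⟨fun t ht htn => ⟨fun e he => ?_, ⟨t, htn, hat t htn⟩, fun i _ hall => ?_⟩,
      fun t t' ht htt' ht' hall => ?_⟩
    · rcases Nat.lt_or_ge e t with het | het
      · have := hlow t e htn het
        omega
      · have := h.z_le hz (J := M) (y := e - t) (by omega)
        rw [show k ^ M + (e - t) = k ^ M - t + e by omega] at this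
        omega
    · have h1 := hall (t - 1) (by omega)
      rw [show k ^ M - t + (t - 1) = k ^ M - 1 by omega, h.z_minus_one hz] at h1
      omega
    · have h1 := hall t (by omega)
      rw [hat t (by omega)] at h1
      have h2 := hlow t' t ht' htt'
      omega
  · have hhigh : ∀ t e, e < n → t ≤ e → t < n → wcount k l c W (k ^ M - t + e) ≤ L + 1 := by
      intro t e he hte htn
      have := h.q_plus_le hq (b := 1) (J := M) (y := e - t) (L := L) (by omega) (by omega)
        (h.q_one_le)
      rwa [one_mul, show k ^ M + (e - t) = k ^ M - t + e by omega] at this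
    have hat : ∀ t, 1 ≤ t → t < n → wcount k l c W (k ^ M - t + (t - 1)) = N := by
      intro t ht htn
      rw [show k ^ M - t + (t - 1) = k ^ M - 1 by omega, h.q_pow hq]
      omega
    refine ⟨fun t ht htn => ⟨fun e he => ?_, ⟨t - 1, by omega, hat t ht htn⟩, fun i hi hall => ?_⟩,
      fun t t' ht htt' ht' hall => ?_⟩
    · rcases Nat.lt_or_ge e t with het | het
      · have := h.q_le hq (J := M) (y := t - e) (by omega) (by omega)
        rw [show k ^ M - (t - e) = k ^ M - t + e by omega] at this
        omega
      · have := hhigh t e he het htn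
        omega
    · have h1 := hall t htn
      have h2 := h.q_plus hq (b := 1) (J := M) (y := 0) (L := L) (by omega) (by omega)
      rw [one_mul, add_zero, wcount_zero, zero_add] at h2
      rw [show k ^ M - t + t = k ^ M by omega, h2] at h1
      have h3 := h.q_one_le
      have h4 : i + t = 0 := by
        by_contra hne
        exact h.q_special_pos hq (by omega) _ hne (by omega)
      omega
    · have h1 := hall (t' - 1) (by omega)
      rw [hat t' (by omega) ht'] at h1
      have h2 := hhigh t (t' - 1) (by omega) (by omega) (by omega)
      omega

end Ctx

/-! ### Words and digit patterns -/

lemma prefix_drop_iff {w y : List ℕ} (hw : w ≠ []) (i : ℕ) :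
    w <+: y.drop i ↔ i + w.length ≤ y.length ∧ ∀ e < w.length, y.getD (i + e) 0 = w.getD e 0 := by
  rw [List.prefix_iff_getElem]
  have hpos := List.length_pos_iff.2 hw
  constructor
  · rintro ⟨h1, h2⟩
    rw [List.length_drop] at h1
    refine ⟨by omega, fun e he => ?_⟩
    have := h2 e he
    rw [List.getElem_drop] at this
    rw [List.getD_eq_getElem _ _ he, List.getD_eq_getElem _ _ (by omega), this]
  · rintro ⟨h1, h2⟩
    refine ⟨by rw [List.length_drop]; omega, fun e he => ?_⟩
    have := h2 e he
    rw [List.getD_eq_getElem _ _ he, List.getD_eq_getElem _ _ (by omega)] at this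
    rw [List.getElem_drop, this]

lemma occ_eq_card (w y : List ℕ) :
    occ w y = ((Finset.range y.length).filter fun i => w <+: y.drop i).card := by
  unfold occ
  simp only [Finset.card_def, Finset.filter_val, Finset.range_val, Multiset.range,
    Multiset.filter_coe, Multiset.coe_card, ← List.isPrefixOf_iff_prefix, Bool.decide_eq_true]

/-- The letters of the word `w` read from right to left, as a digit pattern with the least significant
letter first. -/
def letterOf (w : List ℕ) (e : ℕ) : ℕ := w.reverse.getD e 0

lemma letterOf_eq {w : List ℕ} {e : ℕ} (he : e < w.length) :
    letterOf w e = w.getD (w.length - 1 - e) 0 := by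
  unfold letterOf
  rw [List.getD_eq_getElem _ _ (by simpa using he), List.getElem_reverse,
    List.getD_eq_getElem _ _ (by omega)]

/-- The padding letter for `w`: `k - 1` if `w` begins with `0`, and `0` otherwise. -/
def padOf (k : ℕ) (w : List ℕ) : ℕ := if w.getD 0 0 = 0 then k - 1 else 0

lemma forall_letterOf {w : List ℕ} {p : ℕ → Prop} :
    (∀ e < w.length, p (letterOf w e)) ↔ ∀ d ∈ w, p d := by
  constructor
  · intro h d hd
    obtain ⟨e, he, rfl⟩ := List.mem_iff_getElem.1 hd
    have := h (w.length - 1 - e) (by omega)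
    rw [letterOf_eq (by omega), show w.length - 1 - (w.length - 1 - e) = e by omega,
      List.getD_eq_getElem _ _ he] at this
    exact this
  · intro h e he
    rw [letterOf_eq he, List.getD_eq_getElem _ _ (by omega)]
    exact h _ (List.getElem_mem _)

lemma ctx_of_word {k : ℕ} (hk : 2 ≤ k) {w : List ℕ} (hw : w ≠ []) (hwk : ∀ d ∈ w, d < k) :
    Ctx k w.length (padOf k w) (letterOf w) := by
  have hpos := List.length_pos_iff.2 hw
  have ht : letterOf w (w.length - 1) = w.getD 0 0 := by
    rw [letterOf_eq (by omega), Nat.sub_self]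
  refine ⟨hk, hpos, forall_letterOf.2 hwk, ?_, ?_⟩
  · rw [ht, padOf]; split_ifs with h <;> omega
  · rw [ht, padOf]; split_ifs with h <;> omega

/-- Occurrences of `w` in the base-`k` digits of `m`, counted by their position from the left, match
the occurrences of the pattern in the padded digits, counted by their position from the right.
Here `0` has the empty digit word. -/
lemma occ_digits {k : ℕ} (hk : 2 ≤ k) {w : List ℕ} (hw : w ≠ []) (hwk : ∀ d ∈ w, d < k) (m : ℕ) :
    occ w (Nat.digits k m).reverse = wcount k w.length (padOf k w) (letterOf w) m := by
  have h := ctx_of_word hk hw hwk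
  have hpos := List.length_pos_iff.2 hw
  set T := (Nat.digits k m).length with hT
  have hmT : m < k ^ T := Nat.lt_base_pow_length_digits (by omega)
  have hmT' : ∀ j < T, k ^ j ≤ m := by
    intro j hj
    by_contra hlt
    push Not at hlt
    have := (Nat.digits_length_le_iff (by omega : 1 < k) m (k := j)).2 hlt
    omega
  have hlen : ∀ j, OccAt w.length (letterOf w) (padDig k (padOf k w) m) j → j + w.length ≤ T := by
    intro j hj
    by_contra hlt
    have h1 := hj (w.length - 1) (by omega)
    rw [padDig_of_lt (hmT.trans_le (Nat.pow_le_pow_right (by omega) (by omega)))] at h1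
    exact h.htop h1.symm
  rw [h.S_eq hmT, occ_eq_card, cnt, Nat.count_eq_card_filter_range, List.length_reverse, ← hT]
  have key : ∀ i j, i + w.length + j = T → (w <+: (Nat.digits k m).reverse.drop i ↔
      OccAt w.length (letterOf w) (padDig k (padOf k w) m) j) := by
    intro i j hij
    rw [prefix_drop_iff hw, List.length_reverse, ← hT]
    have dig : ∀ e < w.length, (Nat.digits k m).reverse.getD (i + e) 0 =
        padDig k (padOf k w) m (j + (w.length - 1 - e)) := by
      intro e he
      rw [padDig_eq (Or.inl (hmT' _ (by omega))), List.getD_eq_getElem _ _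
        (by rw [List.length_reverse]; omega), List.getElem_reverse, ← List.getD_eq_getElem _ 0,
        Nat.getD_digits _ _ hk]
      congr 3
      omega
    constructor
    · rintro ⟨-, h2⟩ e he
      have := h2 (w.length - 1 - e) (by omega)
      rw [dig _ (by omega)] at this
      rw [letterOf_eq he, ← this]
      congr 2
      omega
    · intro h2
      refine ⟨by omega, fun e he => ?_⟩
      rw [dig e he, h2 _ (by omega), letterOf_eq (by omega)]
      congr 1
      omega
  have hlen' : ∀ i, w <+: (Nat.digits k m).reverse.drop i → i + w.length ≤ T := by
    intro i hi
    simpa [hT] using ((prefix_drop_iff hw i).1 hi).1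
  refine Finset.card_nbij' (fun i => T - w.length - i) (fun j => T - w.length - j) ?_ ?_ ?_ ?_
  · intro i hi
    simp only [Finset.coe_filter, Finset.mem_range, Set.mem_ofPred_eq] at hi ⊢
    have := hlen' i hi.2
    exact ⟨by omega, (key i _ (by omega)).1 hi.2⟩
  · intro j hj
    simp only [Finset.coe_filter, Finset.mem_range, Set.mem_ofPred_eq] at hj ⊢
    have := hlen j hj.2
    exact ⟨by omega, (key _ j (by omega)).2 hj.2⟩
  · intro i hi
    simp only [Finset.coe_filter, Finset.mem_range, Set.mem_ofPred_eq] at hi ⊢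
    have := hlen' i hi.2
    omega
  · intro j hj
    simp only [Finset.coe_filter, Finset.mem_range, Set.mem_ofPred_eq] at hj ⊢
    have := hlen j hj.2
    omega

/-- The digital sequence agrees with `wcount`, except at `0` for `w = 0`, because the representation of
`0` is the word `0`. -/
lemma dseq_eq {k : ℕ} (hk : 2 ≤ k) {w : List ℕ} (hw : w ≠ []) (hwk : ∀ d ∈ w, d < k) {m : ℕ}
    (hm : m ≠ 0 ∨ w ≠ [0]) : dseq k w m = wcount k w.length (padOf k w) (letterOf w) m := by
  by_cases h0 : m = 0
  · subst h0
    have hw0 : w ≠ [0] := hm.resolve_left (by simp)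
    rw [wcount_zero, dseq, rep, if_pos rfl, occ_eq_card, Finset.card_eq_zero,
      Finset.filter_eq_empty_iff]
    intro i hi hp
    have : i = 0 := by simpa using hi
    subst this
    rw [List.drop_zero] at hp
    rcases hp with ⟨t, ht⟩
    rcases w with _ | ⟨a, w⟩
    · exact hw rfl
    · simp at ht
      exact hw0 (by simp [ht.1, ht.2.1])
  · rw [dseq, rep, if_neg h0, occ_digits hk hw hwk]

lemma dseq_zero (k : ℕ) : dseq k [0] 0 = 1 := by
  simp [dseq, rep, occ]

/-! ### Counting factors -/

lemma factorSet_finite (a : ℕ → ℕ) (n N : ℕ) : (factorSet a n N).Finite := by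
  refine (List.finite_length_eq (Fin (N + 1)) n).image (List.map Fin.val) |>.subset ?_
  rintro u ⟨⟨i, hi⟩, hu⟩
  refine ⟨u.pmap (fun x hx => ⟨x, hx⟩) (fun x hx => Nat.lt_succ_of_le (hu x hx)), ?_, ?_⟩
  · simp [hi]
  · simp [List.map_pmap]

lemma Pc1_eq_ncard (a : ℕ → ℕ) (n N : ℕ) : Pc1 a n N = ((factorSet1 a n N).ncard : ℤ) := by
  have hsub : factorSet a n (N - 1) ⊆ factorSet a n N :=
    fun u hu => ⟨hu.1, fun x hx => (hu.2 x hx).trans (Nat.sub_le _ _)⟩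
  have := Set.ncard_sdiff_add_ncard_of_subset hsub (factorSet_finite a n N)
  rw [Pc1, Pc, Pc, Nat.card_coe_set_eq, Nat.card_coe_set_eq, factorSet1, ← this]
  push_cast
  ring

/-- The factor of length `n` of the sequence `a` starting in position `i`. -/
def win (a : ℕ → ℕ) (n i : ℕ) : List ℕ := (List.range n).map fun j => a (i + j)

lemma win_eq_iff {a b : ℕ → ℕ} {n i i' : ℕ} :
    win a n i = win b n i' ↔ ∀ e < n, a (i + e) = b (i' + e) := by
  simp [win, List.map_inj_left]

lemma mem_factorSet1 {a : ℕ → ℕ} {n N : ℕ} (hN : 1 ≤ N) {u : List ℕ} :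
    u ∈ factorSet1 a n N ↔
      ∃ i, u = win a n i ∧ (∀ e < n, a (i + e) ≤ N) ∧ ∃ e < n, a (i + e) = N := by
  constructor
  · rintro ⟨⟨⟨i, rfl⟩, hu⟩, h2⟩
    have hu' : ∀ e < n, a (i + e) ≤ N := by simpa using hu
    refine ⟨i, rfl, hu', ?_⟩
    by_contra! hne
    refine h2 ⟨⟨i, rfl⟩, ?_⟩
    intro x hx
    obtain ⟨e, he, rfl⟩ := List.mem_map.1 hx
    have he' := List.mem_range.1 he
    have := hu' e he'
    have := hne e he'
    omega
  · rintro ⟨i, rfl, hu, e, he, heN⟩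
    refine ⟨⟨⟨i, rfl⟩, by simpa [win] using hu⟩, ?_⟩
    rintro ⟨-, h2⟩
    have := h2 (a (i + e)) (List.mem_map.2 ⟨e, List.mem_range.2 he, rfl⟩)
    omega

/-- The exceptional value of the digital sequence at `0` does not affect the factors with large
maximum. The only case to check is `w = 0`, `n = N = 1`, where the factor `1` also occurs at
position `k`. -/
lemma factorSet1_dseq {k : ℕ} (hk : 2 ≤ k) {w : List ℕ} (hw : w ≠ []) (hwk : ∀ d ∈ w, d < k)
    {n L N : ℕ} (hn : n ≤ k ^ L) (hN : L + 1 ≤ N) :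
    factorSet1 (dseq k w) n N = factorSet1 (wcount k w.length (padOf k w) (letterOf w)) n N := by
  have h := ctx_of_word hk hw hwk
  have heq : ∀ {m}, m ≠ 0 → dseq k w m = wcount k w.length (padOf k w) (letterOf w) m :=
    fun hm => dseq_eq hk hw hwk (Or.inl hm)
  ext u
  rw [mem_factorSet1 (by omega), mem_factorSet1 (by omega)]
  constructor
  · rintro ⟨i, rfl, h1, e, he, h2⟩
    by_cases hi : i = 0
    · subst hi
      by_cases hw0 : w = [0]
      · subst hw0
        simp only [zero_add] at h1 h2
        have he0 : e = 0 := by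
          by_contra he0
          rw [heq he0] at h2
          have := h.S_le_of_lt (he.trans_le hn)
          omega
        subst he0
        rw [dseq_zero] at h2
        have hL : L = 0 := by omega
        subst hL
        have hn1 : n = 1 := by
          rw [pow_zero] at hn
          omega
        have hv : wcount k [0].length (padOf k [0]) (letterOf [0]) k = 1 := by
          have hz : ∀ e < [0].length, letterOf [0] e = 0 :=
            (forall_letterOf (w := [0]) (p := (· = 0))).2 (by simp)
          simpa using h.z_pow hz 1
        subst hn1 h2
        refine ⟨k, ?_, ?_, 0, he, hv⟩
        · rw [win_eq_iff]
          intro e he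
          have : e = 0 := by omega
          subst this
          exact (dseq_zero k).trans hv.symm
        · intro e he
          have : e = 0 := by omega
          subst this
          exact hv.le
      · have heq' : ∀ m, dseq k w m = wcount k w.length (padOf k w) (letterOf w) m :=
          fun m => dseq_eq hk hw hwk (Or.inr hw0)
        simp only [heq'] at h1 h2
        exact ⟨0, win_eq_iff.2 fun e _ => heq' _, h1, e, he, h2⟩
    · refine ⟨i, win_eq_iff.2 fun e _ => heq (by omega), fun e he => ?_, e, he, ?_⟩
      · rw [← heq (by omega)]; exact h1 e he
      · rw [← heq (by omega)]; exact h2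
  · rintro ⟨i, rfl, h1, e, he, h2⟩
    by_cases hi : i = 0
    · subst hi
      rw [zero_add] at h2
      have := h.S_le_of_lt (he.trans_le hn)
      omega
    · refine ⟨i, win_eq_iff.2 fun e _ => (heq (by omega)).symm, fun e he => ?_, e, he, ?_⟩
      · rw [heq (by omega)]; exact h1 e he
      · rw [heq (by omega)]; exact h2

namespace Ctx
variable {k l c : ℕ} {W : ℕ → ℕ}

lemma image_subset (h : Ctx k l c W) {n L N : ℕ} (hn : n ≤ k ^ L) (hN : L + 2 ≤ N) :
    List.map (· + 1) '' factorSet1 (wcount k l c W) n (N - 1) ⊆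
      factorSet1 (wcount k l c W) n N := by
  rintro _ ⟨u, hu, rfl⟩
  obtain ⟨i, rfl, h1, e, he, h2⟩ := (mem_factorSet1 (by omega)).1 hu
  obtain ⟨i', hi'⟩ := h.exists_increase hn (i := i) ⟨e, he, by omega⟩
  refine (mem_factorSet1 (by omega)).2 ⟨i', ?_, ?_, e, he, ?_⟩
  · simp only [win, List.map_map, List.map_inj_left, List.mem_range]
    exact fun e he => (hi' e he).symm
  · intro e he
    have := h1 e he
    rw [hi' e he]; omega
  · rw [hi' e he]; omega

/-- Every factor with maximum `N` is an increment of a factor with maximum `N - 1`, or, for a constant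
pattern, one of the factors across `k ^ (N + l - 1)`. -/
lemma diff_subset (h : Ctx k l c W) {n L N : ℕ} (hn : n ≤ k ^ L) (hN : L + 2 ≤ N) {u : List ℕ}
    (hu : u ∈ factorSet1 (wcount k l c W) n N) :
    u ∈ List.map (· + 1) '' factorSet1 (wcount k l c W) n (N - 1) ∨
      (((∀ e < l, W e = 0) ∨ (∀ e < l, W e = k - 1)) ∧
        ∃ t ∈ Set.Ioo 0 n, win (wcount k l c W) n (k ^ (N + l - 1) - t) = u) := by
  obtain ⟨i, rfl, h1, e, he, h2⟩ := (mem_factorSet1 (by omega)).1 hu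
  rcases h.exists_decrease hn hN h1 ⟨e, he, h2⟩ with ⟨i', hi'⟩ | ⟨hc, t, ht1, ht, hi'⟩
  · refine Or.inl ⟨win (wcount k l c W) n i', ?_, ?_⟩
    · refine (mem_factorSet1 (by omega)).2 ⟨i', rfl, ?_, e, he, ?_⟩
      · intro e he
        have := h1 e he
        have := hi' e he
        omega
      · have := hi' e he
        omega
    · simp only [win, List.map_map, List.map_inj_left, List.mem_range]
      exact fun e he => (hi' e he).symm
  · exact Or.inr ⟨hc, t, ⟨ht1, ht⟩, (win_eq_iff.2 hi').symm⟩

lemma ncard_of_not_const (h : Ctx k l c W)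
    (hc : ¬ ((∀ e < l, W e = 0) ∨ (∀ e < l, W e = k - 1))) {n L N : ℕ}
    (hn : n ≤ k ^ L) (hN : L + 2 ≤ N) :
    (factorSet1 (wcount k l c W) n N).ncard = (factorSet1 (wcount k l c W) n (N - 1)).ncard := by
  have : factorSet1 (wcount k l c W) n N =
      List.map (· + 1) '' factorSet1 (wcount k l c W) n (N - 1) :=
    Set.Subset.antisymm (fun u hu => (h.diff_subset hn hN hu).resolve_right fun h' => hc h'.1)
      (h.image_subset hn hN)
  rw [this, Set.ncard_image_of_injective _ (List.map_injective_iff.2 (add_left_injective 1))]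

lemma ncard_of_const (h : Ctx k l c W)
    (hc : (∀ e < l, W e = 0) ∨ (∀ e < l, W e = k - 1)) {n L N : ℕ}
    (hn : n ≤ k ^ L) (hN : L + 2 ≤ N) :
    (factorSet1 (wcount k l c W) n N).ncard =
      (factorSet1 (wcount k l c W) n (N - 1)).ncard + (n - 1) := by
  obtain ⟨hnew, hdist⟩ := h.new_windows hc hn hN
  set A := List.map (· + 1) '' factorSet1 (wcount k l c W) n (N - 1)
  set B := (fun t => win (wcount k l c W) n (k ^ (N + l - 1) - t)) '' Set.Ioo 0 n
  have hU : factorSet1 (wcount k l c W) n N = A ∪ B := by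
    apply Set.Subset.antisymm
    · intro u hu
      exact (h.diff_subset hn hN hu).imp id fun h' => h'.2
    · refine Set.union_subset (h.image_subset hn hN) ?_
      rintro _ ⟨t, ⟨ht1, ht⟩, rfl⟩
      obtain ⟨h1, h2, -⟩ := hnew t ht1 ht
      exact (mem_factorSet1 (by omega)).2 ⟨_, rfl, h1, h2⟩
  have hdisj : Disjoint A B := by
    rw [Set.disjoint_left]
    rintro _ ⟨u, hu, rfl⟩ ⟨t, ⟨ht1, ht⟩, hE⟩
    obtain ⟨i, rfl, -, hex⟩ := (mem_factorSet1 (by omega)).1 hu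
    refine (hnew t ht1 ht).2.2 i hex fun e he => ?_
    simp only [win, List.map_map, List.map_inj_left, List.mem_range] at hE
    exact hE e he
  have hA : A.Finite := ((factorSet_finite _ _ _).subset Set.sdiff_subset).image _
  have hB : B.Finite := (Set.finite_Ioo 0 n).image _
  have hinj : Set.InjOn (fun t => win (wcount k l c W) n (k ^ (N + l - 1) - t)) (Set.Ioo 0 n) := by
    rintro t ⟨ht1, ht⟩ t' ⟨ht1', ht'⟩ hE
    have hE' := win_eq_iff.1 hE
    rcases lt_trichotomy t t' with hlt | heq | hgt
    · exact absurd hE' (hdist t t' ht1 hlt ht')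
    · exact heq
    · exact absurd (fun e he => (hE' e he).symm) (hdist t' t ht1' hgt ht)
  rw [hU, Set.ncard_union_eq hdisj hA hB,
    Set.ncard_image_of_injective _ (List.map_injective_iff.2 (add_left_injective 1)),
    hinj.ncard_image, ← Finset.coe_Ioo, Set.ncard_coe_finset, Nat.card_Ioo]
  rfl

end Ctx

theorem stmt2 (k : ℕ) (hk : 2 ≤ k) (w : List ℕ) (hw : w ≠ []) (hwk : ∀ d ∈ w, d < k)
    (n : ℕ) (hn : 1 ≤ n) (N : ℕ) (hN : Nat.clog k n + 2 ≤ N) :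
    (((∀ d ∈ w, d = 0) ∨ (∀ d ∈ w, d = k - 1)) → Pc2 (dseq k w) n N = (n : ℤ) - 1) ∧
    (¬ ((∀ d ∈ w, d = 0) ∨ (∀ d ∈ w, d = k - 1)) → Pc2 (dseq k w) n N = 0) := by
  have h := ctx_of_word hk hw hwk
  have hnL : n ≤ k ^ Nat.clog k n := Nat.le_pow_clog (by omega) n
  rw [Pc2, Pc1_eq_ncard, Pc1_eq_ncard, factorSet1_dseq hk hw hwk hnL (by omega),
    factorSet1_dseq hk hw hwk hnL (by omega : Nat.clog k n + 1 ≤ N - 1),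
    ← forall_letterOf (w := w) (p := (· = 0)), ← forall_letterOf (w := w) (p := (· = k - 1))]
  constructor
  · intro hc
    rw [h.ncard_of_const hc hnL hN]
    push_cast [hn]
    ring
  · intro hc
    rw [h.ncard_of_not_const hc hnL hN, sub_self]
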